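/- There exists a universal constant C > 0 such that the following holds. Let n ∈ ℕ, let 0 < p ≤ 1/2 with pn ∈ ℤ, let k ∈ ℕ, and let f : S(n,p) → {0,1} satisfy ‖f^{>k}‖₂² ≤ ε for some ε ≤ p^{Ck}. Then there exists a function g : S(n,p) → {0,1} of degree ≤ k (i.e. g ∈ L_k) such that Pr_x[f(x) ≠ g(x)] ≤ 2ε, where x is uniform on S(n,p). -/

import Mathlib

open Finset
open scoped Classical

/-- A point of the slice `S(n,p)`: a Boolean vector whose number of ones equals `p * n`. -/
abbrev SlicePoint (n : ℕ) (p : ℝ) : Type :=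
  {x : Fin n → Bool // ((Finset.univ.filter (fun i => x i = true)).card : ℝ) = p * n}

variable {n : ℕ} {p : ℝ}

/-- Expectation with respect to the uniform measure on the slice. -/
noncomputable def sExp (f : SlicePoint n p → ℝ) : ℝ :=
  (∑ x : SlicePoint n p, f x) / (Fintype.card (SlicePoint n p) : ℝ)

/-- The inner product `⟨f,g⟩ = E_x [f x * g x]` on functions on the slice. -/
noncomputable def sInner (f g : SlicePoint n p → ℝ) : ℝ :=
  sExp (fun x => f x * g x)

/-- `‖f‖₂² = E_x [f x ^ 2]`. -/
noncomputable def sNormSq (f : SlicePoint n p → ℝ) : ℝ := sInner f f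

/-- `‖f‖₂`. -/
noncomputable def sNorm (f : SlicePoint n p → ℝ) : ℝ := Real.sqrt (sNormSq f)

/-- The `i`-th coordinate of a slice point, viewed as a real number in `{0,1}`. -/
def coordR (x : SlicePoint n p) (i : Fin n) : ℝ := if x.1 i then 1 else 0

/-- `AND_T (x) = ∏_{i ∈ T} x_i`. -/
def andT (T : Finset (Fin n)) : SlicePoint n p → ℝ := fun x => ∏ i ∈ T, coordR x i

/-- The space `L_k` of functions of degree at most `k` on the slice. -/
def degLE (n : ℕ) (p : ℝ) (k : ℕ) : Submodule ℝ (SlicePoint n p → ℝ) :=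
  Submodule.span ℝ {g | ∃ T : Finset (Fin n), T.card ≤ k ∧ g = andT T}

/-- The space `L_{k-1}` (i.e. spanned by `AND_T` with `|T| < k`). -/
def degLT (n : ℕ) (p : ℝ) (k : ℕ) : Submodule ℝ (SlicePoint n p → ℝ) :=
  Submodule.span ℝ {g | ∃ T : Finset (Fin n), T.card < k ∧ g = andT T}

/-- `fk` is the orthogonal projection `f^{≤ k}` of `f` onto `L_k`. -/
def IsLowProj (n : ℕ) (p : ℝ) (k : ℕ) (f fk : SlicePoint n p → ℝ) : Prop :=
  fk ∈ degLE n p k ∧ ∀ g ∈ degLE n p k, sInner (f - fk) g = 0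

/-- `fk` is the orthogonal projection of `f` onto the span of `AND_T`, `|T| < k`. -/
def IsLowProjLT (n : ℕ) (p : ℝ) (k : ℕ) (f fk : SlicePoint n p → ℝ) : Prop :=
  fk ∈ degLT n p k ∧ ∀ g ∈ degLT n p k, sInner (f - fk) g = 0

/-- `Pr_x [f x ≠ g x]` under the uniform measure on the slice. -/
noncomputable def probNe (f g : SlicePoint n p → ℝ) : ℝ :=
  sExp (fun x => if f x = g x then 0 else 1)

/-- The action of a permutation on a slice point: `(x^π)_{π i} = x_i`. -/
def permPt (π : Equiv.Perm (Fin n)) (x : SlicePoint n p) : SlicePoint n p :=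
  ⟨fun i => x.1 (π.symm i), by
    have h : (Finset.univ.filter (fun i => x.1 (π.symm i) = true)) =
        (Finset.univ.filter (fun i => x.1 i = true)).map π.toEmbedding := by
      ext i
      simp [Finset.mem_map_equiv]
    rw [h, Finset.card_map]
    exact x.2⟩

/-- The derivative operator `D_{ij} f = (f - f^{(ij)})/2`. -/
noncomputable def Dij (i j : Fin n) (f : SlicePoint n p → ℝ) : SlicePoint n p → ℝ :=
  fun x => (f x - f (permPt (Equiv.swap i j) x)) / 2

/-- The derivative operator `D_P` associated with a set `P` of pairs,
obtained by composing the `D_{ab}` for `(a,b) ∈ P` (these commute for tuples). -/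
noncomputable def DP (P : Finset (Fin n × Fin n)) (f : SlicePoint n p → ℝ) :
    SlicePoint n p → ℝ :=
  P.toList.foldr (fun q g => Dij q.1 q.2 g) f

/-- `P` is a `k`-tuple: `k` pairs `(a,b)` with `a < b`, all `2k` entries distinct. -/
def IsTuple {n : ℕ} (k : ℕ) (P : Finset (Fin n × Fin n)) : Prop :=
  P.card = k ∧ (∀ q ∈ P, q.1 < q.2) ∧
    ∀ q ∈ P, ∀ r ∈ P, q ≠ r →
      q.1 ≠ r.1 ∧ q.1 ≠ r.2 ∧ q.2 ≠ r.1 ∧ q.2 ≠ r.2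

/-- `P` is shifted: for every pair `(a,b) ∈ P`, every `a' ≤ a` occurs as an entry of `P`. -/
def IsShifted {n : ℕ} (P : Finset (Fin n × Fin n)) : Prop :=
  ∀ q ∈ P, ∀ a : Fin n, a ≤ q.1 → ∃ r ∈ P, r.1 = a ∨ r.2 = a

/-- `P` is sorted: `a_i < a_j ↔ b_i < b_j`. -/
def IsSorted {n : ℕ} (P : Finset (Fin n × Fin n)) : Prop :=
  ∀ q ∈ P, ∀ r ∈ P, (q.1 < r.1 ↔ q.2 < r.2)

/-- `Ψ_P (x) = ∏_{(a,b) ∈ P} (x_b - x_a)`. -/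
def PsiP (P : Finset (Fin n × Fin n)) : SlicePoint n p → ℝ :=
  fun x => ∏ q ∈ P, (coordR x q.2 - coordR x q.1)

/-- The slice Laplacian `L f = f - (1 / C(n,2)) ∑_{i<j} f^{(ij)}`. -/
noncomputable def sliceLap (f : SlicePoint n p → ℝ) : SlicePoint n p → ℝ :=
  fun x => f x -
    (∑ q ∈ Finset.univ.filter (fun q : Fin n × Fin n => q.1 < q.2),
      f (permPt (Equiv.swap q.1 q.2) x)) / (n.choose 2 : ℝ)

/-- The noise operator `H_t = exp (-t L) = ∑_l (-t)^l L^l / l!`. -/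
noncomputable def Ht (t : ℝ) (f : SlicePoint n p → ℝ) : SlicePoint n p → ℝ :=
  fun x => ∑' l : ℕ, ((-t) ^ l / (l.factorial : ℝ)) * (sliceLap^[l] f) x

/-- The averaging operator `E_I f (x) = E_{Q ∼ S_I} [f (x^Q)]`, averaging over a uniformly
random permutation of the coordinates in `I` (fixing the coordinates outside `I`). -/
noncomputable def avgI (I : Finset (Fin n)) (f : SlicePoint n p → ℝ) : SlicePoint n p → ℝ :=
  fun x => (∑ σ : {σ : Equiv.Perm (Fin n) // ∀ i ∉ I, σ i = i}, f (permPt σ.1 x)) /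
    (Fintype.card {σ : Equiv.Perm (Fin n) // ∀ i ∉ I, σ i = i} : ℝ)

/-- The conditional variance `V_I (f) = ‖f - E_I f‖₂²`. -/
noncomputable def condVar (I : Finset (Fin n)) (f : SlicePoint n p → ℝ) : ℝ :=
  sNormSq (f - avgI I f)

/-- Expectation with respect to the uniform measure on the discrete cube. -/
noncomputable def cExp {n : ℕ} (f : (Fin n → Bool) → ℝ) : ℝ :=
  (∑ x : Fin n → Bool, f x) / (2 ^ n : ℝ)

/-- The Fourier–Walsh coefficient `f̂ (S) = E_x [f x * χ_S x]`. -/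
noncomputable def walshCoeff {n : ℕ} (f : (Fin n → Bool) → ℝ) (S : Finset (Fin n)) : ℝ :=
  cExp (fun x => f x * ∏ i ∈ S, (if x i then (-1 : ℝ) else 1))

/-- The Fourier weight of `f` beyond degree `k`: `W^{>k} (f) = ∑_{|S| > k} f̂(S)²`. -/
noncomputable def WAbove {n : ℕ} (k : ℕ) (f : (Fin n → Bool) → ℝ) : ℝ :=
  ∑ S ∈ Finset.univ.filter (fun S : Finset (Fin n) => k < S.card), walshCoeff f S ^ 2

/-- `Pr_x [f x ≠ g x]` under the uniform measure on the cube. -/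
noncomputable def cProbNe {n : ℕ} (f g : (Fin n → Bool) → ℝ) : ℝ :=
  cExp (fun x => if f x = g x then 0 else 1)

/-- The action of a permutation on a point of the cube: `(x^π)_{π i} = x_i`. -/
def cPerm {n : ℕ} (π : Equiv.Perm (Fin n)) (x : Fin n → Bool) : Fin n → Bool :=
  fun i => x (π.symm i)

/-- The derivative operator on the cube. -/
noncomputable def cDij {n : ℕ} (i j : Fin n) (f : (Fin n → Bool) → ℝ) :
    (Fin n → Bool) → ℝ :=
  fun x => (f x - f (cPerm (Equiv.swap i j) x)) / 2

/-!
The logarithmic Sobolev inequality for the slice, combined with the bound `2 d n` on the Dirichlet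
form of functions of degree at most `d`, says that such a function cannot concentrate its norm on a
set of measure `p ^ (C d)`. In particular, an integer-valued function of degree at most `d` with
tiny norm is zero.

An integer-valued `F` close to a function of degree `d` is rounded to an integer-valued function of
degree `d` by induction on `d`. The discrete derivatives `F (insert i t) - F (insert j t)` live on a
slice with two coordinates fewer and are close to functions of degree `d - 1`, so they can be
rounded. By induction on the dimension, so can `F` on the sets avoiding a given `i`. For a suitable
`i` these roundings fit together, because integer-valued low-degree functions close to one another
are equal, and a function whose derivatives have degree at most `d - 1` has degree at most `d`. The
resulting `G` is only polynomially close to `F`, but `F` and `G` differ on a set so small that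
`q - G` carries little norm there for any `q` of degree `d`, which improves the error to twice the
distance from `F` to `q`. Finally, if `F` takes values in `{0, 1}` then so does `G`, because
`G ^ 2 - G` vanishes off the small set where `F` and `G` differ.
-/

namespace KindlerSafra

section SliceSums

variable {ι : Type*} [DecidableEq ι]

lemma insert_mem_powersetCard {U t : Finset ι} {r : ℕ} {i : ι} (hi : i ∈ U)
    (ht : t ∈ powersetCard r (U.erase i)) : insert i t ∈ powersetCard (r + 1) U := by
  rw [mem_powersetCard, subset_erase] at ht
  rw [mem_powersetCard, card_insert_of_notMem ht.1.2, ht.2]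
  exact ⟨insert_subset hi ht.1.1, rfl⟩

lemma notMem_of_mem_powersetCard_erase {U t : Finset ι} {r : ℕ} {i : ι}
    (ht : t ∈ powersetCard r (U.erase i)) : i ∉ t :=
  (subset_erase.1 (mem_powersetCard.1 ht).1).2

lemma powersetCard_erase_subset (U : Finset ι) (r : ℕ) (i : ι) :
    powersetCard r (U.erase i) ⊆ powersetCard r U :=
  powersetCard_mono (erase_subset i U)

lemma sdiff_mem_powersetCard {U s : Finset ι} {r : ℕ} (hs : s ∈ powersetCard r U) :
    U \ s ∈ powersetCard (#U - r) U := by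
  rw [mem_powersetCard] at hs ⊢
  exact ⟨sdiff_subset, by rw [card_sdiff_of_subset hs.1, hs.2]⟩

lemma cast_card_sdiff_of_mem_powersetCard {U s : Finset ι} {r : ℕ} (hs : s ∈ powersetCard r U) :
    (#(U \ s) : ℝ) = #U - r := by
  rw [mem_powersetCard] at hs
  rw [cast_card_sdiff hs.1, hs.2]

variable {M : Type*} [AddCommMonoid M]

lemma sum_powersetCard_succ {U : Finset ι} {i : ι} (hi : i ∈ U) (r : ℕ) (f : Finset ι → M) :
    ∑ s ∈ powersetCard (r + 1) U, f s =
      ∑ t ∈ powersetCard r (U.erase i), f (insert i t) +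
        ∑ s ∈ powersetCard (r + 1) (U.erase i), f s := by
  conv_lhs => rw [← insert_erase hi, powersetCard_succ_insert (notMem_erase i U)]
  rw [sum_union, add_comm, sum_image]
  · intro s hs t ht hst
    rw [← erase_insert (notMem_of_mem_powersetCard_erase hs), hst,
      erase_insert (notMem_of_mem_powersetCard_erase ht)]
  · refine disjoint_left.2 fun s hs hs' => notMem_of_mem_powersetCard_erase hs ?_
    obtain ⟨t, -, rfl⟩ := mem_image.1 hs'
    exact mem_insert_self i t

lemma sum_sum_powersetCard_erase (U : Finset ι) (r : ℕ) (φ : ι → Finset ι → M) :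
    ∑ i ∈ U, ∑ s ∈ powersetCard r (U.erase i), φ i s =
      ∑ s ∈ powersetCard r U, ∑ i ∈ U \ s, φ i s :=
  sum_comm' fun i s => by simp only [mem_powersetCard, subset_erase, mem_sdiff]; tauto

lemma sum_sum_erase_powersetCard (U : Finset ι) (r : ℕ) (φ : ι → Finset ι → M) :
    ∑ s ∈ powersetCard (r + 1) U, ∑ i ∈ s, φ i (s.erase i) =
      ∑ t ∈ powersetCard r U, ∑ i ∈ U \ t, φ i t := by
  have hswap : ∑ s ∈ powersetCard (r + 1) U, ∑ i ∈ s, φ i (s.erase i) =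
      ∑ i ∈ U, ∑ s ∈ powersetCard (r + 1) U with i ∈ s, φ i (s.erase i) :=
    sum_comm' fun s i => by
      simp only [mem_powersetCard, mem_filter]
      exact ⟨fun h => ⟨h, h.1.1 h.2⟩, fun h => h.1⟩
  rw [hswap, ← sum_sum_powersetCard_erase]
  refine sum_congr rfl fun i hi => ?_
  refine sum_nbij' (fun s => s.erase i) (insert i) ?_ ?_ ?_ ?_ fun _ _ => rfl
  · intro s hs
    rw [mem_filter, mem_powersetCard] at hs
    rw [mem_powersetCard, card_erase_of_mem hs.2, hs.1.2]
    exact ⟨erase_subset_erase i hs.1.1, rfl⟩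
  · exact fun t ht => mem_filter.2 ⟨insert_mem_powersetCard hi ht, mem_insert_self i t⟩
  · exact fun s hs => insert_erase (mem_filter.1 hs).2
  · exact fun t ht => erase_insert (notMem_of_mem_powersetCard_erase ht)

lemma sum_sum_insert_powersetCard (U : Finset ι) (r : ℕ) (φ : ι → Finset ι → M) :
    ∑ i ∈ U, ∑ t ∈ powersetCard r (U.erase i), φ i (insert i t) =
      ∑ s ∈ powersetCard (r + 1) U, ∑ i ∈ s, φ i s := by
  rw [sum_sum_powersetCard_erase, ← sum_sum_erase_powersetCard]
  exact sum_congr rfl fun s _ => sum_congr rfl fun i hi => by rw [insert_erase hi]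

lemma sum_powersetCard_sdiff {U : Finset ι} {r : ℕ} (hr : r ≤ #U) (f : Finset ι → M) :
    ∑ s ∈ powersetCard (#U - r) U, f (U \ s) = ∑ s ∈ powersetCard r U, f s := by
  have hinv {k : ℕ} {s : Finset ι} (hs : s ∈ powersetCard k U) : U \ (U \ s) = s :=
    Finset.sdiff_sdiff_eq_self (mem_powersetCard.1 hs).1
  refine sum_nbij' (U \ ·) (U \ ·) (fun s hs => ?_) (fun s hs => sdiff_mem_powersetCard hs)
    (fun s hs => hinv hs) (fun s hs => hinv hs) fun _ _ => rfl
  simpa only [Nat.sub_sub_self hr] using sdiff_mem_powersetCard hs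

lemma sum_sum_powersetCard_erase_eq_mul (U : Finset ι) (r : ℕ) (f : Finset ι → ℝ) :
    ∑ i ∈ U, ∑ s ∈ powersetCard r (U.erase i), f s =
      (#U - r) * ∑ s ∈ powersetCard r U, f s := by
  rw [sum_sum_powersetCard_erase, mul_sum]
  refine sum_congr rfl fun s hs => ?_
  rw [sum_const, nsmul_eq_mul, cast_card_sdiff_of_mem_powersetCard hs]

lemma sum_sum_insert_sdiff_eq_mul (U : Finset ι) (r : ℕ) (f : Finset ι → ℝ) :
    ∑ t ∈ powersetCard r U, ∑ i ∈ U \ t, f (insert i t) =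
      (r + 1) * ∑ s ∈ powersetCard (r + 1) U, f s := by
  rw [← sum_sum_erase_powersetCard, mul_sum]
  refine sum_congr rfl fun s hs => ?_
  rw [sum_congr rfl fun i hi => by rw [insert_erase hi], sum_const, nsmul_eq_mul,
    (mem_powersetCard.1 hs).2, Nat.cast_succ]

end SliceSums

section Entropy

variable {α : Type*}

/-- The entropy of `f ^ 2` with respect to the counting measure on `𝒜`, without normalization:
`∑ f² log (f² / μ)`, where `μ` is the mean of `f²` over `𝒜`. -/
noncomputable def entropySq (𝒜 : Finset α) (f : α → ℝ) : ℝ :=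
  ∑ s ∈ 𝒜, f s ^ 2 * Real.log (f s ^ 2) -
    (∑ s ∈ 𝒜, f s ^ 2) * Real.log ((∑ s ∈ 𝒜, f s ^ 2) / #𝒜)

lemma entropySq_of_card_eq_one {𝒜 : Finset α} (h : #𝒜 = 1) (f : α → ℝ) : entropySq 𝒜 f = 0 := by
  obtain ⟨s, rfl⟩ := card_eq_one.1 h
  simp [entropySq]

lemma sq_mul_log_sq_le {u K : ℝ} (hu : 0 ≤ u) (hK : 4 ≤ K) (hKu : 4 + 2 * Real.log u ≤ K) :
    u ^ 2 * Real.log (u ^ 2) ≤ u ^ 2 - 1 + K * (u - 1) ^ 2 := by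
  rcases hu.eq_or_lt with rfl | hu
  · norm_num
    linarith
  have hlog := Real.log_le_sub_one_of_pos hu
  rw [Real.log_pow, Nat.cast_ofNat]
  rcases le_total u 1 with hu1 | hu1
  · have hlog' : u ^ 2 * (2 * Real.log u) ≤ u ^ 2 * (2 * (u - 1)) := by gcongr
    have hK' : 4 * (u - 1) ^ 2 ≤ K * (u - 1) ^ 2 := by gcongr
    have hcube : 0 ≤ (1 - u) * ((1 - u) * (3 - 2 * u)) := by
      have := sub_nonneg.2 hu1
      exact mul_nonneg this (mul_nonneg this (by linarith))
    linarith
  · have hlog' : 2 * Real.log u * (2 * u - 1) ≤ 2 * (u - 1) * (2 * u - 1) :=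
      mul_le_mul_of_nonneg_right (by linarith) (by linarith)
    have hK' : (4 + 2 * Real.log u) * (u - 1) ^ 2 ≤ K * (u - 1) ^ 2 := by gcongr
    linarith [sq_nonneg (u - 1)]

lemma sq_mul_log_sq_le_of_pos {a σ K : ℝ} (ha : 0 ≤ a) (hσ : 0 < σ) (hK : 4 ≤ K)
    (hKa : 4 + Real.log (a ^ 2 / σ ^ 2) ≤ K) :
    a ^ 2 * Real.log (a ^ 2) ≤
      a ^ 2 * Real.log (σ ^ 2) + (a ^ 2 - σ ^ 2) + K * (a - σ) ^ 2 := by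
  rcases ha.eq_or_lt with rfl | ha
  · have : 4 * σ ^ 2 ≤ K * σ ^ 2 := by gcongr
    norm_num
    nlinarith
  have hu := sq_mul_log_sq_le (u := a / σ) (by positivity) hK
    (by rwa [← div_pow, Real.log_pow, Nat.cast_ofNat] at hKa)
  have hlog : σ ^ 2 * ((a / σ) ^ 2 * Real.log ((a / σ) ^ 2)) =
      a ^ 2 * Real.log (a ^ 2) - a ^ 2 * Real.log (σ ^ 2) := by
    rw [div_pow, Real.log_div (by positivity) (by positivity)]
    field_simp
  have hscale : σ ^ 2 * ((a / σ) ^ 2 - 1 + K * (a / σ - 1) ^ 2) =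
      a ^ 2 - σ ^ 2 + K * (a - σ) ^ 2 := by
    field_simp
  linarith [mul_le_mul_of_nonneg_left hu (sq_nonneg σ)]

lemma add_mul_sq_sub_le {N₁ N₀ a b σ : ℝ} (h₁ : 0 < N₁) (h₀ : 0 < N₀) (ha : 0 ≤ a) (hb : 0 ≤ b)
    (hσ : 0 ≤ σ) (hσ2 : (N₁ + N₀) * σ ^ 2 = N₁ * a ^ 2 + N₀ * b ^ 2) :
    N₁ * (a - σ) ^ 2 + N₀ * (b - σ) ^ 2 ≤ 2 * (N₁ * N₀ / (N₁ + N₀) * (a - b) ^ 2) := by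
  have hN : 0 < N₁ + N₀ := by positivity
  have hvar : (N₁ * a + N₀ * b) ^ 2 + N₁ * N₀ * (a - b) ^ 2 = ((N₁ + N₀) * σ) ^ 2 := by
    linear_combination -(N₁ + N₀) * hσ2
  have hmean : N₁ * a + N₀ * b ≤ (N₁ + N₀) * σ :=
    abs_le_of_sq_le_sq' (by nlinarith [mul_nonneg (mul_pos h₁ h₀).le (sq_nonneg (a - b))])
      (by positivity) |>.2
  rw [div_mul_eq_mul_div, mul_div_assoc', le_div_iff₀ hN]
  nlinarith [mul_le_mul_of_nonneg_left hmean (by positivity : 0 ≤ N₁ * a + N₀ * b)]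

lemma two_point_logSobolev {N₁ N₀ a b K : ℝ} (h₁ : 0 < N₁) (h₀ : 0 < N₀) (ha : 0 ≤ a)
    (hb : 0 ≤ b) (hK : 4 + Real.log ((N₁ + N₀) / N₁) + Real.log ((N₁ + N₀) / N₀) ≤ K) :
    N₁ * (a ^ 2 * Real.log (a ^ 2)) + N₀ * (b ^ 2 * Real.log (b ^ 2)) -
        (N₁ * a ^ 2 + N₀ * b ^ 2) * Real.log ((N₁ * a ^ 2 + N₀ * b ^ 2) / (N₁ + N₀)) ≤
      2 * K * (N₁ * N₀ / (N₁ + N₀) * (a - b) ^ 2) := by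
  have hN : 0 < N₁ + N₀ := by positivity
  have hl₁ : 0 ≤ Real.log ((N₁ + N₀) / N₁) := Real.log_nonneg (by rw [le_div_iff₀ h₁]; linarith)
  have hl₀ : 0 ≤ Real.log ((N₁ + N₀) / N₀) := Real.log_nonneg (by rw [le_div_iff₀ h₀]; linarith)
  have hK4 : 4 ≤ K := by linarith
  set μ := (N₁ * a ^ 2 + N₀ * b ^ 2) / (N₁ + N₀)
  have hμN : (N₁ + N₀) * μ = N₁ * a ^ 2 + N₀ * b ^ 2 := mul_div_cancel₀ _ hN.ne'
  have hμ0 : 0 ≤ μ := by positivity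
  rcases hμ0.eq_or_lt with hμ0 | hμ0
  · have ha0 : a ^ 2 = 0 := by nlinarith [mul_nonneg h₁.le (sq_nonneg a), sq_nonneg b]
    have hb0 : b ^ 2 = 0 := by nlinarith [sq_nonneg a, mul_nonneg h₀.le (sq_nonneg b)]
    rw [ha0, hb0]
    simp only [zero_mul, mul_zero, add_zero, sub_zero]
    positivity
  have hσ : √μ ^ 2 = μ := Real.sq_sqrt hμ0.le
  have hsq {c N : ℝ} (hc : 0 ≤ c) (hN' : 0 < N) (hcN : N * c ^ 2 ≤ (N₁ + N₀) * μ)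
      (hKN : 4 + Real.log ((N₁ + N₀) / N) ≤ K) :
      c ^ 2 * Real.log (c ^ 2) ≤ c ^ 2 * Real.log μ + (c ^ 2 - μ) + K * (c - √μ) ^ 2 := by
    have hlog : 4 + Real.log (c ^ 2 / √μ ^ 2) ≤ K := by
      rcases hc.eq_or_lt with rfl | hc
      · simpa using hK4
      rw [hσ]
      refine le_trans ?_ hKN
      gcongr 4 + Real.log ?_
      rwa [div_le_div_iff₀ hμ0 hN', mul_comm]
    simpa only [hσ] using sq_mul_log_sq_le_of_pos hc (Real.sqrt_pos.2 hμ0) hK4 hlog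
  have hA := hsq ha h₁ (by rw [hμN]; nlinarith [sq_nonneg b]) (by linarith)
  have hB := hsq hb h₀ (by rw [hμN]; nlinarith [sq_nonneg a]) (by linarith)
  have hvar := add_mul_sq_sub_le h₁ h₀ ha hb (Real.sqrt_nonneg μ) (by rw [hσ, hμN])
  nlinarith [mul_le_mul_of_nonneg_left hA h₁.le, mul_le_mul_of_nonneg_left hB h₀.le,
    mul_le_mul_of_nonneg_left hvar (by linarith : 0 ≤ K)]

lemma two_block_logSobolev {X Y N₁ N₀ K : ℝ} (hX : 0 ≤ X) (hY : 0 ≤ Y) (h₁ : 0 < N₁)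
    (h₀ : 0 < N₀) (hK : 4 + Real.log ((N₁ + N₀) / N₁) + Real.log ((N₁ + N₀) / N₀) ≤ K) :
    X * Real.log (X / N₁) + Y * Real.log (Y / N₀) - (X + Y) * Real.log ((X + Y) / (N₁ + N₀)) ≤
      2 * K * (√(N₀ / (N₁ + N₀) * X) - √(N₁ / (N₁ + N₀) * Y)) ^ 2 := by
  have h := two_point_logSobolev h₁ h₀ (Real.sqrt_nonneg (X / N₁)) (Real.sqrt_nonneg (Y / N₀)) hK
  have hXN : N₁ * (X / N₁) = X := mul_div_cancel₀ X h₁.ne'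
  have hYN : N₀ * (Y / N₀) = Y := mul_div_cancel₀ Y h₀.ne'
  rw [Real.sq_sqrt (by positivity), Real.sq_sqrt (by positivity), ← mul_assoc N₁, ← mul_assoc N₀,
    hXN, hYN] at h
  refine h.trans_eq ?_
  have hc : (0 : ℝ) ≤ N₁ * N₀ / (N₁ + N₀) := by positivity
  have hXc : N₀ / (N₁ + N₀) * X = N₁ * N₀ / (N₁ + N₀) * (X / N₁) := by field_simp
  have hYc : N₁ / (N₁ + N₀) * Y = N₁ * N₀ / (N₁ + N₀) * (Y / N₀) := by field_simp
  rw [hXc, hYc, Real.sqrt_mul hc, Real.sqrt_mul hc, ← mul_sub, mul_pow, Real.sq_sqrt hc]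

lemma mul_le_mul_log_add_exp {v μ : ℝ} (hv : 0 ≤ v) (hμ : 0 < μ) (y : ℝ) :
    v * y ≤ v * Real.log v - v * Real.log μ - v + μ * Real.exp y := by
  rcases hv.eq_or_lt with rfl | hv
  · simp only [zero_mul, sub_zero, zero_add]
    positivity
  have h := Real.log_le_sub_one_of_pos (x := μ * Real.exp y / v) (by positivity)
  rw [Real.log_div (by positivity) (by positivity), Real.log_mul (by positivity) (by positivity),
    Real.log_exp] at h
  have hv' : v * (μ * Real.exp y / v - 1) = μ * Real.exp y - v := by field_simp
  linarith [mul_le_mul_of_nonneg_left h hv.le]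

lemma mul_sum_sq_le_entropySq_add {𝒜 ℬ : Finset α} (hℬ : ℬ ⊆ 𝒜) (f : α → ℝ) {t : ℝ}
    (ht : #ℬ * Real.exp t ≤ #𝒜) :
    t * ∑ s ∈ ℬ, f s ^ 2 ≤ entropySq 𝒜 f + ∑ s ∈ 𝒜, f s ^ 2 := by
  set S := ∑ s ∈ 𝒜, f s ^ 2 with hS
  have hS0 : 0 ≤ S := sum_nonneg fun _ _ => sq_nonneg _
  rcases hS0.eq_or_lt with hS0 | hS0
  · have hf : ∀ s ∈ 𝒜, f s ^ 2 = 0 :=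
      (sum_eq_zero_iff_of_nonneg fun _ _ => sq_nonneg _).1 hS0.symm
    rw [entropySq, ← hS, ← hS0, sum_eq_zero fun s hs => hf s (hℬ hs),
      sum_eq_zero fun s hs => by rw [hf s hs, zero_mul]]
    simp
  have hcard : (0 : ℝ) < #𝒜 := by
    rw [Nat.cast_pos, card_pos]
    exact nonempty_of_sum_ne_zero hS0.ne'
  obtain ⟨μ, hμ⟩ : ∃ μ, μ = S / #𝒜 := ⟨_, rfl⟩
  have hμ0 : 0 < μ := hμ ▸ div_pos hS0 hcard
  have hyoung (c : ℝ) (s : α) := mul_le_mul_log_add_exp (sq_nonneg (f s)) hμ0 c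
  have hin := sum_le_sum fun s (_ : s ∈ ℬ) => hyoung t s
  have hout := sum_le_sum fun s (_ : s ∈ 𝒜 \ ℬ) => hyoung 0 s
  simp only [sum_add_distrib, sum_sub_distrib, ← sum_mul, sum_const, nsmul_eq_mul, mul_zero,
    Real.exp_zero, mul_one] at hin hout
  have hexp : #ℬ * (μ * Real.exp t) + #(𝒜 \ ℬ) * μ ≤ S + S := by
    have hμS : #𝒜 * μ = S := by rw [hμ, mul_div_cancel₀ S hcard.ne']
    rw [cast_card_sdiff hℬ]
    nlinarith [mul_le_mul_of_nonneg_left ht hμ0.le,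
      mul_nonneg (Nat.cast_nonneg (α := ℝ) #ℬ) hμ0.le]
  rw [entropySq, ← hS, ← hμ]
  have hlog := sum_sdiff (f := fun s => f s ^ 2 * Real.log (f s ^ 2)) hℬ
  have hsq := sum_sdiff (f := fun s => f s ^ 2) hℬ
  have hlogμ := congrArg (· * Real.log μ) hsq
  simp only [add_mul, ← hS] at hlogμ hsq
  linarith

end Entropy

section LogSobolev

variable {ι : Type*} [DecidableEq ι]

/-- The Dirichlet form of the transposition walk on the slice `powersetCard (r + 1) U`. Its edges
join `insert a t` to `insert c t`, so the sum is organised by the common part `t`, of size `r`. -/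
def dirichletForm (U : Finset ι) (r : ℕ) (f : Finset ι → ℝ) : ℝ :=
  ∑ t ∈ powersetCard r U, ∑ a ∈ U \ t, ∑ c ∈ U \ t, (f (insert a t) - f (insert c t)) ^ 2

/-- The part of the Dirichlet form carried by the transpositions that exchange `i ∉ V` with an
element of `V`. -/
def localEnergy (V : Finset ι) (r : ℕ) (f : Finset ι → ℝ) (i : ι) : ℝ :=
  ∑ t ∈ powersetCard r V, ∑ c ∈ V \ t, (f (insert i t) - f (insert c t)) ^ 2

lemma dirichletForm_nonneg (U : Finset ι) (r : ℕ) (f : Finset ι → ℝ) :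
    0 ≤ dirichletForm U r f :=
  sum_nonneg fun _ _ => sum_nonneg fun _ _ => sum_nonneg fun _ _ => sq_nonneg _

lemma sum_localEnergy (U : Finset ι) (r : ℕ) (f : Finset ι → ℝ) :
    ∑ i ∈ U, localEnergy (U.erase i) r f i = dirichletForm U r f := by
  simp only [localEnergy, dirichletForm, sum_sum_powersetCard_erase, erase_sdiff_comm]
  refine sum_congr rfl fun t _ => sum_congr rfl fun i _ => sum_erase _ ?_
  rw [sub_self, sq, zero_mul]

lemma sum_sum_sum_erase (V : Finset ι) (φ : ι → ι → ℝ) (hφ : ∀ a, φ a a = 0) :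
    ∑ i ∈ V, ∑ a ∈ V.erase i, ∑ c ∈ V.erase i, φ a c = (#V - 2) * ∑ a ∈ V, ∑ c ∈ V, φ a c := by
  have hsplit (i : ι) (hi : i ∈ V) : ∑ a ∈ V.erase i, ∑ c ∈ V.erase i, φ a c =
      ∑ a ∈ V, ∑ c ∈ V, φ a c - ∑ a ∈ V, φ a i - ∑ c ∈ V, φ i c := by
    simp only [sum_erase_eq_sub hi, sum_sub_distrib, hφ]
    ring
  rw [sum_congr rfl hsplit, sum_sub_distrib, sum_sub_distrib, sum_const, nsmul_eq_mul,
    sum_comm (f := fun i a => φ a i)]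
  ring

lemma sum_dirichletForm_erase (U : Finset ι) (r : ℕ) (f : Finset ι → ℝ) :
    ∑ i ∈ U, dirichletForm (U.erase i) r f = (#U - (r + 1) - 1) * dirichletForm U r f := by
  simp only [dirichletForm, sum_sum_powersetCard_erase, erase_sdiff_comm]
  rw [mul_sum]
  refine sum_congr rfl fun t ht => ?_
  rw [sum_sum_sum_erase _ (fun a c => (f (insert a t) - f (insert c t)) ^ 2) fun a => by
    rw [sub_self, sq, zero_mul], cast_card_sdiff_of_mem_powersetCard ht]
  ring

lemma sum_dirichletForm_erase_insert (U : Finset ι) (r : ℕ) (f : Finset ι → ℝ) :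
    ∑ i ∈ U, dirichletForm (U.erase i) r (fun t => f (insert i t)) =
      (r + 1) * dirichletForm U (r + 1) f := by
  set ψ : Finset ι → ℝ := fun s =>
    ∑ a ∈ U \ s, ∑ c ∈ U \ s, (f (insert a s) - f (insert c s)) ^ 2
  have hψ (i : ι) (t : Finset ι) : ∑ a ∈ U.erase i \ t, ∑ c ∈ U.erase i \ t,
      (f (insert i (insert a t)) - f (insert i (insert c t))) ^ 2 = ψ (insert i t) := by
    rw [erase_sdiff_comm, ← sdiff_insert]
    refine sum_congr rfl fun a _ => sum_congr rfl fun c _ => ?_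
    rw [insert_comm i a, insert_comm i c]
  simp only [dirichletForm, hψ]
  rw [sum_sum_insert_powersetCard U r fun _ => ψ, mul_sum]
  refine sum_congr rfl fun s hs => ?_
  rw [sum_const, nsmul_eq_mul, (mem_powersetCard.1 hs).2, Nat.cast_succ]

lemma sq_sqrt_sub_sqrt_le {α : Type*} (s : Finset α) (f g : α → ℝ) :
    (√(∑ x ∈ s, f x ^ 2) - √(∑ x ∈ s, g x ^ 2)) ^ 2 ≤ ∑ x ∈ s, (f x - g x) ^ 2 := by
  have hcs := Real.sum_mul_le_sqrt_mul_sqrt s f g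
  simp only [sub_sq, sum_add_distrib, sum_sub_distrib, mul_assoc, ← mul_sum]
  rw [Real.sq_sqrt (sum_nonneg fun _ _ => sq_nonneg _),
    Real.sq_sqrt (sum_nonneg fun _ _ => sq_nonneg _)]
  linarith

lemma sq_sqrt_sub_sqrt_le_localEnergy (V : Finset ι) (r : ℕ) (f : Finset ι → ℝ) (i : ι) :
    (√((#V - r) * ∑ t ∈ powersetCard r V, f (insert i t) ^ 2) -
      √((r + 1) * ∑ s ∈ powersetCard (r + 1) V, f s ^ 2)) ^ 2 ≤ localEnergy V r f i := by
  have hin : (#V - r) * ∑ t ∈ powersetCard r V, f (insert i t) ^ 2 =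
      ∑ t ∈ powersetCard r V, ∑ _c ∈ V \ t, f (insert i t) ^ 2 := by
    rw [mul_sum]
    refine sum_congr rfl fun t ht => ?_
    rw [sum_const, nsmul_eq_mul, cast_card_sdiff_of_mem_powersetCard ht]
  rw [hin, ← sum_sum_insert_sdiff_eq_mul, localEnergy]
  have h := sq_sqrt_sub_sqrt_le ((powersetCard r V).sigma (V \ ·)) (fun x => f (insert i x.1))
    fun x => f (insert x.2 x.1)
  simpa only [sum_sigma] using h

/-- The logarithmic Sobolev constant obtained for the slice of weight `r` in dimension `n`; up to
absolute constants it is the logarithm of `n ^ 2 / (r * (n - r))`. -/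
noncomputable def logSobolevConst (n r : ℝ) : ℝ :=
  12 + 2 * (2 * Real.log n - Real.log r - Real.log (n - r))

lemma twelve_le_logSobolevConst {n r : ℝ} (hr : 0 < r) (hn : r < n) : 12 ≤ logSobolevConst n r := by
  have hlogr : Real.log r ≤ Real.log n := Real.log_le_log hr hn.le
  have hlognr : Real.log (n - r) ≤ Real.log n := Real.log_le_log (by linarith) (by linarith)
  unfold logSobolevConst
  linarith

lemma mul_log_sub_mul_log_le {m : ℝ} (hm : 1 ≤ m) :
    m * Real.log m - (m - 1) * Real.log (m - 1) ≤ 1 + Real.log m := by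
  rcases hm.eq_or_lt with rfl | hm
  · simp
  have hm1 : 0 < m - 1 := by linarith
  have h := Real.log_le_sub_one_of_pos (x := m / (m - 1)) (by positivity)
  rw [Real.log_div (by positivity) (by positivity)] at h
  have hinv : m / (m - 1) - 1 = 1 / (m - 1) := by
    field_simp
    ring
  rw [hinv, le_div_iff₀ hm1] at h
  linarith

lemma logSobolevConst_recursion {n r : ℝ} (hr : 1 ≤ r) (hn : r + 1 ≤ n) :
    (r - 1) * logSobolevConst (n - 1) (r - 1) + (n - r - 1) * logSobolevConst (n - 1) r +
      (logSobolevConst n r - 4) * ((n - 1) / n) ≤ (n - 1) * logSobolevConst n r := by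
  have hLC := twelve_le_logSobolevConst (by linarith : 0 < r) (by linarith : r < n)
  have hfrac : (logSobolevConst n r - 4) * ((n - 1) / n) ≤ logSobolevConst n r - 4 := by
    refine mul_le_of_le_one_right (by linarith) ?_
    rw [div_le_one (by linarith)]
    linarith
  have hr' := mul_log_sub_mul_log_le hr
  have hnr := mul_log_sub_mul_log_le (by linarith : 1 ≤ n - r)
  have hlogn : (n - 2) * Real.log (n - 1) ≤ (n - 2) * Real.log n :=
    mul_le_mul_of_nonneg_left (Real.log_le_log (by linarith) (by linarith)) (by linarith)
  refine (add_le_add_right hfrac _).trans ?_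
  rw [logSobolevConst, logSobolevConst, logSobolevConst, sub_sub_sub_cancel_right,
    sub_right_comm n 1 r]
  linarith

lemma choose_div_choose_succ_succ {n r : ℕ} (hr : r ≤ n) :
    (n.choose r / (n + 1).choose (r + 1) : ℝ) = (r + 1) / (n + 1) := by
  have hpos : (0 : ℝ) < (n + 1).choose (r + 1) := by exact_mod_cast Nat.choose_pos (by lia)
  rw [div_eq_div_iff hpos.ne' (by positivity), mul_comm, mul_comm (r + 1 : ℝ)]
  exact_mod_cast Nat.add_one_mul_choose_eq n r

lemma choose_succ_div_choose_succ_succ {n r : ℕ} (hr : r ≤ n) :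
    (n.choose (r + 1) / (n + 1).choose (r + 1) : ℝ) = (n - r) / (n + 1) := by
  have hpos : (0 : ℝ) < (n + 1).choose (r + 1) := by exact_mod_cast Nat.choose_pos (by lia)
  have hpascal : (n.choose (r + 1) : ℝ) = (n + 1).choose (r + 1) - n.choose r := by
    rw [Nat.choose_succ_succ]
    push_cast
    ring
  rw [hpascal, sub_div, div_self hpos.ne', choose_div_choose_succ_succ hr]
  field_simp
  ring

lemma two_slice_logSobolev {X Y : ℝ} (hX : 0 ≤ X) (hY : 0 ≤ Y) {n r : ℕ} (hr : r + 1 ≤ n) :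
    X * Real.log (X / n.choose r) + Y * Real.log (Y / n.choose (r + 1)) -
        (X + Y) * Real.log ((X + Y) / (n + 1).choose (r + 1)) ≤
      (logSobolevConst (n + 1) (r + 1) - 4) / (n + 1) *
        (√((n - r) * X) - √((r + 1) * Y)) ^ 2 := by
  have hrn : (r + 1 : ℝ) ≤ n := mod_cast hr
  have h₁ : (0 : ℝ) < n.choose r := mod_cast Nat.choose_pos (by lia)
  have h₀ : (0 : ℝ) < n.choose (r + 1) := mod_cast Nat.choose_pos hr
  have hN : ((n + 1).choose (r + 1) : ℝ) = n.choose r + n.choose (r + 1) := by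
    rw [Nat.choose_succ_succ, Nat.cast_add]
  have hfrac₁ := choose_div_choose_succ_succ (by lia : r ≤ n)
  have hfrac₀ := choose_succ_div_choose_succ_succ (by lia : r ≤ n)
  rw [hN] at hfrac₁ hfrac₀ ⊢
  have hK : 4 + Real.log ((n.choose r + n.choose (r + 1)) / n.choose r) +
      Real.log ((n.choose r + n.choose (r + 1)) / n.choose (r + 1)) ≤
        (logSobolevConst (n + 1) (r + 1) - 4) / 2 := by
    rw [← inv_div, hfrac₁, ← inv_div (n.choose (r + 1) : ℝ), hfrac₀, inv_div, inv_div,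
      Real.log_div (by positivity) (by positivity), Real.log_div (by positivity) (by linarith),
      logSobolevConst, add_sub_add_right_eq_sub]
    linarith
  refine (two_block_logSobolev hX hY h₁ h₀ hK).trans_eq ?_
  rw [hfrac₁, hfrac₀, div_mul_eq_mul_div, div_mul_eq_mul_div, Real.sqrt_div' _ (by positivity),
    Real.sqrt_div' _ (by positivity), ← sub_div, div_pow, Real.sq_sqrt (by positivity)]
  ring

lemma entropySq_powersetCard_succ_le {U : Finset ι} {i : ι} (hi : i ∈ U) {r : ℕ}
    (hr : r + 1 < #U) (f : Finset ι → ℝ) :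
    entropySq (powersetCard (r + 1) U) f ≤
      entropySq (powersetCard r (U.erase i)) (fun t => f (insert i t)) +
        entropySq (powersetCard (r + 1) (U.erase i)) f +
        (logSobolevConst #U (r + 1) - 4) / #U * localEnergy (U.erase i) r f i := by
  obtain ⟨n, hn⟩ : ∃ n, #U = n + 1 := ⟨#U - 1, by lia⟩
  have hcard : #(U.erase i) = n := by rw [card_erase_of_mem hi, hn, Nat.add_sub_cancel]
  have hLC : 12 ≤ logSobolevConst (n + 1) (r + 1) :=
    twelve_le_logSobolevConst (by positivity) (by exact_mod_cast hn ▸ hr)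
  have hlocal := mul_le_mul_of_nonneg_left (sq_sqrt_sub_sqrt_le_localEnergy (U.erase i) r f i)
    (by bound : 0 ≤ (logSobolevConst (n + 1) (r + 1) - 4) / (n + 1))
  rw [hcard] at hlocal
  have hslice := (two_slice_logSobolev (sum_nonneg fun t _ => sq_nonneg (f (insert i t)))
    (sum_nonneg fun s _ => sq_nonneg (f s)) (by lia : r + 1 ≤ n)).trans hlocal
  simp only [entropySq, sum_powersetCard_succ hi, card_powersetCard, hcard, hn]
  push_cast
  linarith

theorem card_mul_entropySq_le (U : Finset ι) {r : ℕ} (hr : r + 1 < #U) (f : Finset ι → ℝ) :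
    #U * entropySq (powersetCard (r + 1) U) f ≤
      logSobolevConst #U (r + 1) * dirichletForm U r f := by
  induction hn : #U generalizing U r f with
  | zero => lia
  | succ n ih =>
    have hcard {i : ι} (hi : i ∈ U) : #(U.erase i) = n := by
      rw [card_erase_of_mem hi, hn, Nat.add_sub_cancel]
    have hrn : (r + 1 : ℝ) ≤ n := mod_cast (by lia : r + 1 ≤ n)
    have hin : n * ∑ i ∈ U, entropySq (powersetCard r (U.erase i)) (fun t => f (insert i t)) ≤
        r * logSobolevConst n r * dirichletForm U r f := by
      cases r with
      | zero => simp [entropySq_of_card_eq_one]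
      | succ r =>
        rw [mul_sum, Nat.cast_succ, mul_comm (r + 1 : ℝ), mul_assoc,
          ← sum_dirichletForm_erase_insert, mul_sum]
        exact sum_le_sum fun i hi => ih _ (by rw [hcard hi]; lia) _ (hcard hi)
    have hout : n * ∑ i ∈ U, entropySq (powersetCard (r + 1) (U.erase i)) f ≤
        (n - (r + 1)) * logSobolevConst n (r + 1) * dirichletForm U r f := by
      rcases (by lia : r + 1 = n ∨ r + 1 < n) with rfl | hlt
      · rw [sum_eq_zero fun i hi => entropySq_of_card_eq_one (by simp [hcard hi]) f]
        simp
      · have henergy := sum_dirichletForm_erase U r f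
        rw [hn, Nat.cast_succ, sub_right_comm, add_sub_cancel_right] at henergy
        rw [mul_sum, mul_comm (_ - _ : ℝ), mul_assoc, ← henergy, mul_sum]
        exact sum_le_sum fun i hi => ih _ (by rwa [hcard hi]) _ (hcard hi)
    have hsplit := sum_le_sum fun i hi => entropySq_powersetCard_succ_le (U := U) (i := i) hi hr f
    simp only [sum_const, nsmul_eq_mul, sum_add_distrib, ← mul_sum, sum_localEnergy, hn] at hsplit
    have hrec := mul_le_mul_of_nonneg_right (logSobolevConst_recursion (n := n + 1) (r := r + 1)
      (by linarith [r.cast_nonneg (α := ℝ)]) (by linarith)) (dirichletForm_nonneg U r f)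
    simp only [add_sub_cancel_right, add_sub_add_right_eq_sub] at hrec
    push_cast at hsplit ⊢
    refine le_of_mul_le_mul_left ?_ (by linarith [r.cast_nonneg (α := ℝ)] : (0 : ℝ) < n)
    refine (mul_le_mul_of_nonneg_left hsplit n.cast_nonneg).trans ?_
    have hslope : n * ((logSobolevConst (n + 1) (r + 1) - 4) / (n + 1) * dirichletForm U r f) =
      (logSobolevConst (n + 1) (r + 1) - 4) * (n / (n + 1)) * dirichletForm U r f := by ring
    linarith

end LogSobolev

section Degree

variable {ι : Type*} [DecidableEq ι] {i j : ι} {U : Finset ι} {𝒜 ℬ : Finset (Finset ι)}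
  {F G : Finset ι → ℝ} {d r a b K L : ℕ}

/-- `AND_T`, evaluated at the point of the cube whose set of ones is `s`. -/
def andIndicator (T s : Finset ι) : ℝ := if T ⊆ s then 1 else 0

/-- The functions that agree on `𝒜` with a linear combination of the `AND_T` with `#T < K`. The
strict bound leaves room for the space of functions of negative degree, `K = 0`. -/
def degreeLT (K : ℕ) (𝒜 : Finset (Finset ι)) : Submodule ℝ (Finset ι → ℝ) :=
  ((Submodule.span ℝ (andIndicator '' {T | #T < K})).map
    (LinearMap.funLeft ℝ ℝ ((↑) : 𝒜 → Finset ι))).comap (LinearMap.funLeft ℝ ℝ (↑))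

lemma mem_degreeLT : F ∈ degreeLT K 𝒜 ↔
    ∃ P ∈ Submodule.span ℝ (andIndicator '' {T : Finset ι | #T < K}), ∀ s ∈ 𝒜, F s = P s := by
  simp only [degreeLT, Submodule.mem_comap, Submodule.mem_map, funext_iff, Subtype.forall,
    LinearMap.funLeft_apply, eq_comm]

lemma andIndicator_of_mem {T s : Finset ι} (hi : i ∈ T) (his : i ∉ s) : andIndicator T s = 0 :=
  if_neg fun h => his (h hi)

lemma andIndicator_insert (i : ι) (T s : Finset ι) :
    andIndicator T (insert i s) = andIndicator (T.erase i) s := by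
  simp only [andIndicator, subset_insert_iff]

lemma andIndicator_mul (S T s : Finset ι) :
    andIndicator S s * andIndicator T s = andIndicator (S ∪ T) s := by
  simp only [andIndicator, union_subset_iff, ite_and, mul_ite, mul_one, mul_zero]
  split_ifs <;> rfl

lemma andIndicator_eq_ite {s t : Finset ι} (hs : s ∈ powersetCard r U)
    (ht : t ∈ powersetCard r U) : andIndicator t s = if t = s then 1 else 0 := by
  rw [mem_powersetCard] at hs ht
  refine if_congr ⟨fun h => eq_of_subset_of_card_le h (hs.2.trans ht.2.symm).le, ?_⟩ rfl rfl
  exact fun h => h.subset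

lemma andIndicator_mem_degreeLT {T : Finset ι} (hT : #T < K) :
    andIndicator T ∈ degreeLT K 𝒜 :=
  mem_degreeLT.2 ⟨_, Submodule.subset_span ⟨T, hT, rfl⟩, fun _ _ => rfl⟩

lemma mem_degreeLT_congr (h : ∀ s ∈ 𝒜, F s = G s) : F ∈ degreeLT K 𝒜 ↔ G ∈ degreeLT K 𝒜 := by
  simp only [mem_degreeLT]
  exact exists_congr fun P => and_congr_right fun _ =>
    forall₂_congr fun s hs => by rw [h s hs]

lemma mem_degreeLT_of_eq_zero (h : ∀ s ∈ 𝒜, F s = 0) : F ∈ degreeLT K 𝒜 :=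
  (mem_degreeLT_congr h).2 (zero_mem _)

lemma degreeLT_mono (h : K ≤ L) : degreeLT K 𝒜 ≤ degreeLT L 𝒜 := fun _ hF => by
  obtain ⟨P, hP, hFP⟩ := mem_degreeLT.1 hF
  exact mem_degreeLT.2
    ⟨P, Submodule.span_mono (Set.image_mono fun _ hT => lt_of_lt_of_le hT h) hP, hFP⟩

lemma eq_zero_of_mem_degreeLT_zero (hF : F ∈ degreeLT 0 𝒜) {s : Finset ι} (hs : s ∈ 𝒜) :
    F s = 0 := by
  obtain ⟨P, hP, hFP⟩ := mem_degreeLT.1 hF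
  simp only [not_lt_zero, Set.ofPred_false, Set.image_empty, Submodule.span_empty,
    Submodule.mem_bot] at hP
  rw [hFP s hs, hP, Pi.zero_apply]

lemma map_mem_degreeLT {φ : (Finset ι → ℝ) →ₗ[ℝ] Finset ι → ℝ}
    (hlocal : ∀ F, (∀ s ∈ 𝒜, F s = 0) → ∀ s ∈ ℬ, φ F s = 0)
    (hand : ∀ T : Finset ι, #T < K → φ (andIndicator T) ∈ degreeLT L ℬ)
    (hF : F ∈ degreeLT K 𝒜) : φ F ∈ degreeLT L ℬ := by
  obtain ⟨P, hP, hFP⟩ := mem_degreeLT.1 hF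
  have hφP : φ P ∈ degreeLT L ℬ := by
    have hspan : Submodule.span ℝ (andIndicator '' {T | #T < K}) ≤ (degreeLT L ℬ).comap φ := by
      rw [Submodule.span_le]
      rintro _ ⟨T, hT, rfl⟩
      exact hand T hT
    exact hspan hP
  refine (mem_degreeLT_congr fun s hs => ?_).2 hφP
  rw [← sub_eq_zero, ← Pi.sub_apply, ← map_sub]
  exact hlocal _ (fun s hs => sub_eq_zero.2 (hFP s hs)) s hs

lemma comp_mem_degreeLT {π : Finset ι → Finset ι} (hπ : ∀ s ∈ ℬ, π s ∈ 𝒜)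
    (hand : ∀ T : Finset ι, #T < K → andIndicator T ∘ π ∈ degreeLT L ℬ)
    (hF : F ∈ degreeLT K 𝒜) : F ∘ π ∈ degreeLT L ℬ :=
  map_mem_degreeLT (φ := LinearMap.funLeft ℝ ℝ π) (fun _ hF s hs => hF _ (hπ s hs)) hand hF

lemma mem_degreeLT_of_subset (h : ℬ ⊆ 𝒜) (hF : F ∈ degreeLT K 𝒜) : F ∈ degreeLT K ℬ :=
  comp_mem_degreeLT (π := id) h (fun _ => andIndicator_mem_degreeLT) hF

lemma const_mem_degreeLT (K : ℕ) (c : ℝ) : (fun _ => c) ∈ degreeLT (K + 1) 𝒜 := by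
  have hc : (fun _ => c) = c • andIndicator (∅ : Finset ι) := by
    ext s
    simp [andIndicator]
  rw [hc]
  exact Submodule.smul_mem _ _ (andIndicator_mem_degreeLT (by simp))

lemma eqOn_const_of_mem_degreeLT_one (hF : F ∈ degreeLT 1 𝒜) : ∃ c, ∀ s ∈ 𝒜, F s = c := by
  obtain ⟨P, hP, hFP⟩ := mem_degreeLT.1 hF
  have hset : {T : Finset ι | #T < 1} = {∅} := by
    ext T
    simp
  rw [hset, Set.image_singleton, Submodule.mem_span_singleton] at hP
  obtain ⟨c, rfl⟩ := hP
  exact ⟨c, fun s hs => by simp [hFP s hs, andIndicator]⟩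

lemma mul_mem_degreeLT (hF : F ∈ degreeLT (a + 1) 𝒜) (hG : G ∈ degreeLT (b + 1) 𝒜) :
    F * G ∈ degreeLT (a + b + 1) 𝒜 := by
  refine map_mem_degreeLT (φ := LinearMap.mulRight ℝ G) (fun F hF s hs => ?_) (fun S hS => ?_) hF
  · rw [LinearMap.mulRight_apply, Pi.mul_apply, hF s hs, zero_mul]
  refine map_mem_degreeLT (φ := LinearMap.mulLeft ℝ (andIndicator S)) (fun G hG s hs => ?_)
    (fun T hT => ?_) hG
  · rw [LinearMap.mulLeft_apply, Pi.mul_apply, hG s hs, mul_zero]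
  have hmul : LinearMap.mulLeft ℝ (andIndicator S) (andIndicator T) = andIndicator (S ∪ T) :=
    funext fun s => andIndicator_mul S T s
  rw [hmul]
  exact andIndicator_mem_degreeLT ((card_union_le S T).trans_lt (by lia))

lemma comp_insert_mem_degreeLT (hi : i ∈ U) (hF : F ∈ degreeLT K (powersetCard (r + 1) U)) :
    (fun t => F (insert i t)) ∈ degreeLT K (powersetCard r (U.erase i)) := by
  refine comp_mem_degreeLT (fun _ => insert_mem_powersetCard hi) (fun T hT => ?_) hF
  have hcomp : andIndicator T ∘ insert i = andIndicator (T.erase i) :=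
    funext fun s => andIndicator_insert i T s
  rw [hcomp]
  exact andIndicator_mem_degreeLT (card_erase_le.trans_lt hT)

lemma sub_insert_mem_degreeLT (hi : i ∈ U) (hj : j ∈ U) (hij : i ≠ j)
    (hF : F ∈ degreeLT (d + 1) (powersetCard (r + 1) U)) :
    (fun t => F (insert i t) - F (insert j t)) ∈
      degreeLT d (powersetCard r ((U.erase i).erase j)) := by
  have hmem {t : Finset ι} (ht : t ∈ powersetCard r ((U.erase i).erase j)) :
      t ∈ powersetCard r (U.erase i) ∧ t ∈ powersetCard r (U.erase j) :=
    ⟨powersetCard_erase_subset _ _ _ ht, powersetCard_erase_subset _ _ i (by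
      rwa [erase_right_comm])⟩
  refine map_mem_degreeLT
    (φ := LinearMap.funLeft ℝ ℝ (insert i) - LinearMap.funLeft ℝ ℝ (insert j))
    (fun F hF t ht => ?_) (fun T hT => ?_) hF
  · simp only [LinearMap.sub_apply, Pi.sub_apply, LinearMap.funLeft_apply]
    rw [hF _ (insert_mem_powersetCard hi (hmem ht).1),
      hF _ (insert_mem_powersetCard hj (hmem ht).2), sub_zero]
  have hnot {t : Finset ι} (ht : t ∈ powersetCard r ((U.erase i).erase j)) : i ∉ t ∧ j ∉ t :=
    ⟨notMem_of_mem_powersetCard_erase (hmem ht).1, notMem_of_mem_powersetCard_erase (hmem ht).2⟩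
  have hcard {a : ι} (ha : a ∈ T) : #(T.erase a) < d := by
    rw [card_erase_of_mem ha]
    have := card_pos.2 ⟨a, ha⟩
    lia
  simp only [LinearMap.sub_apply]
  by_cases hiT : i ∈ T
  · refine (mem_degreeLT_congr fun t ht => ?_).2 (andIndicator_mem_degreeLT (hcard hiT))
    simp only [Pi.sub_apply, LinearMap.funLeft_apply, andIndicator_insert]
    rw [andIndicator_of_mem (mem_erase.2 ⟨hij, hiT⟩) (hnot ht).1, sub_zero]
  by_cases hjT : j ∈ T
  · refine (mem_degreeLT_congr fun t ht => ?_).2 (neg_mem (andIndicator_mem_degreeLT (hcard hjT)))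
    simp only [Pi.sub_apply, Pi.neg_apply, LinearMap.funLeft_apply, andIndicator_insert]
    rw [andIndicator_of_mem (mem_erase.2 ⟨hij.symm, hjT⟩) (hnot ht).2, zero_sub]
  · refine mem_degreeLT_of_eq_zero fun t _ => ?_
    simp only [Pi.sub_apply, LinearMap.funLeft_apply, andIndicator_insert,
      erase_eq_of_notMem hiT, erase_eq_of_notMem hjT, sub_self]

lemma mem_degreeLT_of_lt (hr : r < K) (F : Finset ι → ℝ) : F ∈ degreeLT K (powersetCard r U) := by
  have hsum : ∑ t ∈ powersetCard r U, F t • andIndicator t ∈ degreeLT K (powersetCard r U) :=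
    sum_mem fun t ht => Submodule.smul_mem _ _
      (andIndicator_mem_degreeLT ((mem_powersetCard.1 ht).2.trans_lt hr))
  refine (mem_degreeLT_congr fun s hs => ?_).2 hsum
  rw [Finset.sum_apply, sum_eq_single_of_mem s hs]
  · simp [andIndicator_eq_ite hs hs]
  · intro t ht hts
    simp [andIndicator_eq_ite hs ht, hts]

lemma disjointIndicator_mem_degreeLT (T : Finset ι) :
    (fun s => if Disjoint T s then (1 : ℝ) else 0) ∈ degreeLT (#T + 1) 𝒜 := by
  induction T using Finset.induction_on with
  | empty => simpa using const_mem_degreeLT 0 1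
  | insert a T ha ih =>
    have hcompl : (fun _ => (1 : ℝ)) - andIndicator {a} ∈ degreeLT (1 + 1) 𝒜 :=
      sub_mem (const_mem_degreeLT 1 1) (andIndicator_mem_degreeLT (by simp))
    rw [card_insert_of_notMem ha, add_comm #T 1]
    convert mul_mem_degreeLT hcompl ih using 1
    ext s
    by_cases has : a ∈ s <;> simp [has, disjoint_insert_left, andIndicator]

lemma comp_sdiff_mem_degreeLT (hF : F ∈ degreeLT K (powersetCard (#U - r) U)) :
    (fun s => F (U \ s)) ∈ degreeLT K (powersetCard r U) := by
  refine comp_mem_degreeLT (fun _ => sdiff_mem_powersetCard) (fun T hT => ?_) hF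
  by_cases hTU : T ⊆ U
  · refine (mem_degreeLT_congr fun s _ => ?_).2
      (degreeLT_mono (Nat.succ_le_of_lt hT) (disjointIndicator_mem_degreeLT T))
    simp [andIndicator, subset_sdiff, hTU]
  · exact mem_degreeLT_of_eq_zero fun s _ => if_neg fun h => hTU (h.trans sdiff_subset)

lemma mem_degreeLT_of_card_lt (hU : #U < K + r) (F : Finset ι → ℝ) :
    F ∈ degreeLT K (powersetCard r U) := by
  rcases lt_or_ge #U r with hr | hr
  · exact mem_degreeLT_of_eq_zero fun s hs => by simp [powersetCard_eq_empty.2 hr] at hs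
  refine (mem_degreeLT_congr fun s hs => ?_).2
    (comp_sdiff_mem_degreeLT (mem_degreeLT_of_lt (by lia) fun s => F (U \ s)))
  rw [Finset.sdiff_sdiff_eq_self (mem_powersetCard.1 hs).1]

lemma exists_mem_forall_sum_sub_mul_eq_zero {α : Type*} (V : Submodule ℝ (α → ℝ)) (s : Finset α)
    (f : α → ℝ) : ∃ g ∈ V, ∀ h ∈ V, ∑ x ∈ s, (f x - g x) * h x = 0 := by
  let φ : (α → ℝ) →ₗ[ℝ] EuclideanSpace ℝ s :=
    (WithLp.linearEquiv 2 ℝ (s → ℝ)).symm.toLinearMap ∘ₗ LinearMap.funLeft ℝ ℝ (↑)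
  obtain ⟨_, ⟨g, hg, rfl⟩, z, hz, hfz⟩ := (V.map φ).exists_add_mem_mem_orthogonal (φ f)
  refine ⟨g, hg, fun h hh => ?_⟩
  have horth := (Submodule.mem_orthogonal _ _).1 hz (φ h) ⟨h, hh, rfl⟩
  rw [eq_sub_of_add_eq' hfz.symm, PiLp.inner_apply] at horth
  rw [← sum_coe_sort, ← horth]
  exact sum_congr rfl fun x _ => by simp [φ]

end Degree

section EnergyBound

variable {ι : Type*} [DecidableEq ι] {U : Finset ι} {F : Finset ι → ℝ} {d r : ℕ}

/-- Removes a point and then adds a point of `U`, summed over all choices. On a slice this is, up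
to scaling and a multiple of the identity, the generator of the walk by random transpositions. -/
def upDown (U : Finset ι) : (Finset ι → ℝ) →ₗ[ℝ] Finset ι → ℝ where
  toFun F s := ∑ b ∈ s, ∑ a ∈ U \ s.erase b, F (insert a (s.erase b))
  map_add' F G := by
    ext s
    simp only [Pi.add_apply, sum_add_distrib]
  map_smul' c F := by
    ext s
    simp only [Pi.smul_apply, RingHom.id_apply, smul_sum]

lemma upDown_apply (U : Finset ι) (F : Finset ι → ℝ) (s : Finset ι) :
    upDown U F s = ∑ b ∈ s, ∑ a ∈ U \ s.erase b, F (insert a (s.erase b)) :=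
  rfl

lemma erase_mem_powersetCard {s : Finset ι} {b : ι} (hs : s ∈ powersetCard (r + 1) U)
    (hb : b ∈ s) : s.erase b ∈ powersetCard r U := by
  rw [mem_powersetCard] at hs ⊢
  exact ⟨(erase_subset b s).trans hs.1, by rw [card_erase_of_mem hb, hs.2, Nat.add_sub_cancel]⟩

lemma upDown_eq_zero (hF : ∀ s ∈ powersetCard (r + 1) U, F s = 0) {s : Finset ι}
    (hs : s ∈ powersetCard (r + 1) U) : upDown U F s = 0 := by
  refine sum_eq_zero fun b hb => sum_eq_zero fun a ha => hF _ ?_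
  obtain ⟨hsU, hcard⟩ := mem_powersetCard.1 (erase_mem_powersetCard hs hb)
  rw [mem_sdiff] at ha
  exact mem_powersetCard.2
    ⟨insert_subset ha.1 hsU, by rw [card_insert_of_notMem ha.2, hcard]⟩

lemma sum_mul_upDown (U : Finset ι) (r : ℕ) (F G : Finset ι → ℝ) :
    ∑ s ∈ powersetCard (r + 1) U, F s * upDown U G s =
      ∑ t ∈ powersetCard r U, (∑ b ∈ U \ t, F (insert b t)) * ∑ a ∈ U \ t, G (insert a t) := by
  simp only [sum_mul]
  rw [← sum_sum_erase_powersetCard U r fun b t => F (insert b t) * ∑ a ∈ U \ t, G (insert a t)]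
  refine sum_congr rfl fun s _ => ?_
  rw [upDown_apply, mul_sum]
  exact sum_congr rfl fun b hb => by rw [insert_erase hb]

lemma sum_mul_upDown_comm (U : Finset ι) (r : ℕ) (F G : Finset ι → ℝ) :
    ∑ s ∈ powersetCard (r + 1) U, F s * upDown U G s =
      ∑ s ∈ powersetCard (r + 1) U, G s * upDown U F s := by
  simp only [sum_mul_upDown, mul_comm]

lemma sum_sum_sub_sq {α : Type*} (s : Finset α) (x : α → ℝ) :
    ∑ a ∈ s, ∑ c ∈ s, (x a - x c) ^ 2 = 2 * (#s * ∑ a ∈ s, x a ^ 2) - 2 * (∑ a ∈ s, x a) ^ 2 := by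
  simp only [sub_sq, sum_add_distrib, sum_sub_distrib, sum_const, nsmul_eq_mul, ← mul_sum,
    mul_assoc, ← sum_mul]
  ring

lemma dirichletForm_eq (U : Finset ι) (r : ℕ) (F : Finset ι → ℝ) :
    dirichletForm U r F = 2 * ((#U - r) * (r + 1) * ∑ s ∈ powersetCard (r + 1) U, F s ^ 2) -
      2 * ∑ s ∈ powersetCard (r + 1) U, F s * upDown U F s := by
  rw [mul_assoc, ← sum_sum_insert_sdiff_eq_mul, sum_mul_upDown, mul_sum, mul_sum, mul_sum,
    ← sum_sub_distrib, dirichletForm]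
  refine sum_congr rfl fun t ht => ?_
  rw [sum_sum_sub_sq _ fun a => F (insert a t), cast_card_sdiff_of_mem_powersetCard ht, sq]

lemma sum_sdiff_andIndicator_insert {T t : Finset ι} (hT : T ⊆ U) (ht : t ∈ powersetCard r U) :
    ∑ a ∈ U \ t, andIndicator T (insert a t) =
      (#U - r - #T) * andIndicator T t + ∑ a ∈ T, andIndicator (T.erase a) t := by
  have hzero {a : ι} (ha : a ∉ T \ t) : andIndicator (T.erase a) t - andIndicator T t = 0 := by
    rw [mem_sdiff, not_and_not_right] at ha
    by_cases haT : a ∈ T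
    · rw [← andIndicator_insert, insert_eq_self.2 (ha haT), sub_self]
    · rw [erase_eq_of_notMem haT, sub_self]
  have hsum : ∑ a ∈ U \ t, (andIndicator (T.erase a) t - andIndicator T t) =
      ∑ a ∈ T, (andIndicator (T.erase a) t - andIndicator T t) := by
    rw [← sum_subset (sdiff_subset_sdiff hT le_rfl) fun a _ => hzero,
      ← sum_subset sdiff_subset fun a _ => hzero]
  rw [sum_sub_distrib, sum_sub_distrib, sum_const, sum_const, nsmul_eq_mul, nsmul_eq_mul,
    cast_card_sdiff_of_mem_powersetCard ht] at hsum
  simp only [andIndicator_insert]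
  linarith

lemma sum_andIndicator_erase {T s : Finset ι} (hs : s ∈ powersetCard (r + 1) U) :
    ∑ b ∈ s, andIndicator T (s.erase b) = (r + 1 - #T) * andIndicator T s := by
  by_cases hTs : T ⊆ s
  · have hb (b : ι) : andIndicator T (s.erase b) = if b ∈ T then 0 else 1 := by
      simp [andIndicator, subset_erase, hTs]
    have hcard : (#(s \ T) : ℝ) = r + 1 - #T := by
      rw [cast_card_sdiff hTs, (mem_powersetCard.1 hs).2]
      push_cast
      rfl
    have hT : andIndicator T s = 1 := if_pos hTs
    simp only [hb, sum_ite, sum_const_zero, zero_add, sum_const, nsmul_eq_mul, mul_one,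
      filter_notMem_eq_sdiff, hcard, hT]
  · have hT : andIndicator T s = 0 := if_neg hTs
    rw [hT, mul_zero]
    exact sum_eq_zero fun b _ => if_neg fun h => hTs (h.trans (erase_subset b s))

lemma upDown_andIndicator {T s : Finset ι} (hT : T ⊆ U) (hs : s ∈ powersetCard (r + 1) U) :
    upDown U (andIndicator T) s = (#U - r - #T) * (r + 1 - #T) * andIndicator T s +
      (r + 2 - #T) * ∑ a ∈ T, andIndicator (T.erase a) s := by
  rw [upDown_apply, sum_congr rfl fun b hb =>
      sum_sdiff_andIndicator_insert hT (erase_mem_powersetCard hs hb), sum_add_distrib,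
    ← mul_sum, sum_andIndicator_erase hs, sum_comm, mul_sum, mul_assoc]
  congr 1
  refine sum_congr rfl fun a ha => ?_
  rw [sum_andIndicator_erase hs, cast_card_erase_of_mem ha]
  ring

lemma upDown_sub_smul_mem_degreeLT (hF : F ∈ degreeLT (d + 1) (powersetCard (r + 1) U)) :
    upDown U F - ((#U - r - d) * (r + 1 - d) : ℝ) • F ∈
      degreeLT d (powersetCard (r + 1) U) := by
  set φ : (Finset ι → ℝ) →ₗ[ℝ] Finset ι → ℝ :=
    upDown U - ((#U - r - d) * (r + 1 - d) : ℝ) • LinearMap.id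
  have hlocal (F : Finset ι → ℝ) (hF : ∀ s ∈ powersetCard (r + 1) U, F s = 0)
      (s : Finset ι) (hs : s ∈ powersetCard (r + 1) U) : φ F s = 0 := by
    simp [φ, hF s hs, upDown_eq_zero hF hs]
  refine map_mem_degreeLT (φ := φ) hlocal (fun T hT => ?_) hF
  by_cases hTU : T ⊆ U
  swap
  · refine mem_degreeLT_of_eq_zero (hlocal _ fun s hs => if_neg fun h => hTU ?_)
    exact h.trans (mem_powersetCard.1 hs).1
  have hT' : #T ≤ d := Nat.lt_succ_iff.1 hT
  have hlower : ∑ a ∈ T, andIndicator (T.erase a) ∈ degreeLT d (powersetCard (r + 1) U) := by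
    refine sum_mem fun a ha => andIndicator_mem_degreeLT ?_
    rw [card_erase_of_mem ha]
    have := card_pos.2 ⟨a, ha⟩
    lia
  have hlead : (((#U - r - #T) * (r + 1 - #T) : ℝ) - (#U - r - d) * (r + 1 - d)) •
      andIndicator T ∈ degreeLT d (powersetCard (r + 1) U) := by
    rcases hT'.eq_or_lt with rfl | hT'
    · simp
    · exact Submodule.smul_mem _ _ (andIndicator_mem_degreeLT hT')
  refine (mem_degreeLT_congr fun s hs => ?_).2
    (add_mem hlead (Submodule.smul_mem _ (r + 2 - #T : ℝ) hlower))
  simp only [φ, LinearMap.sub_apply, LinearMap.smul_apply, LinearMap.id_apply, Pi.sub_apply,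
    Pi.add_apply, Pi.smul_apply, Finset.sum_apply, upDown_andIndicator hTU hs, smul_eq_mul]
  ring

lemma sum_sq_eq_add_of_orthogonal {α : Type*} {s : Finset α} {f g : α → ℝ}
    (h : ∑ x ∈ s, (f x - g x) * g x = 0) :
    ∑ x ∈ s, f x ^ 2 = ∑ x ∈ s, g x ^ 2 + ∑ x ∈ s, (f x - g x) ^ 2 := by
  rw [← sum_add_distrib, ← sub_eq_zero, ← sum_sub_distrib, ← mul_zero 2, ← h, mul_sum]
  exact sum_congr rfl fun x _ => by ring

lemma dirichletForm_eq_add {G : Finset ι → ℝ} (hF : F ∈ degreeLT (d + 1) (powersetCard (r + 1) U))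
    (hG : G ∈ degreeLT d (powersetCard (r + 1) U))
    (horth : ∀ H ∈ degreeLT d (powersetCard (r + 1) U),
      ∑ s ∈ powersetCard (r + 1) U, (F s - G s) * H s = 0) :
    dirichletForm U r F = dirichletForm U r G +
      2 * (d * (#U + 1 - d)) * ∑ s ∈ powersetCard (r + 1) U, (F s - G s) ^ 2 := by
  set μ : ℝ := (#U - r - d) * (r + 1 - d) with hμ
  have hG' : G ∈ degreeLT (d + 1) (powersetCard (r + 1) U) := degreeLT_mono d.le_succ hG
  have hdown : upDown U G ∈ degreeLT d (powersetCard (r + 1) U) := by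
    have h := add_mem (upDown_sub_smul_mem_degreeLT hG') (Submodule.smul_mem _ μ hG)
    rwa [sub_add_cancel] at h
  have hcross : ∑ s ∈ powersetCard (r + 1) U, (F - G) s * upDown U G s = 0 := horth _ hdown
  have htop : ∑ s ∈ powersetCard (r + 1) U, (F - G) s * upDown U (F - G) s =
      μ * ∑ s ∈ powersetCard (r + 1) U, (F s - G s) ^ 2 := by
    rw [mul_sum, ← sub_eq_zero, ← sum_sub_distrib,
      ← horth _ (upDown_sub_smul_mem_degreeLT (sub_mem hF hG'))]
    refine sum_congr rfl fun s _ => ?_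
    simp only [Pi.sub_apply, Pi.smul_apply, smul_eq_mul]
    ring
  have hsplit : ∑ s ∈ powersetCard (r + 1) U, F s * upDown U F s =
      ∑ s ∈ powersetCard (r + 1) U, G s * upDown U G s +
        ∑ s ∈ powersetCard (r + 1) U, (F - G) s * upDown U G s +
        ∑ s ∈ powersetCard (r + 1) U, G s * upDown U (F - G) s +
        ∑ s ∈ powersetCard (r + 1) U, (F - G) s * upDown U (F - G) s := by
    simp only [← sum_add_distrib, map_sub, Pi.sub_apply]
    exact sum_congr rfl fun s _ => by ring
  rw [dirichletForm_eq, dirichletForm_eq, sum_sq_eq_add_of_orthogonal (horth G hG), hsplit,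
    sum_mul_upDown_comm U r G (F - G), hcross, htop, hμ]
  ring

theorem dirichletForm_le (hF : F ∈ degreeLT d (powersetCard (r + 1) U)) :
    dirichletForm U r F ≤ 2 * (d - 1) * #U * ∑ s ∈ powersetCard (r + 1) U, F s ^ 2 := by
  induction d generalizing F with
  | zero =>
    have hsq : ∑ s ∈ powersetCard (r + 1) U, F s ^ 2 = 0 := sum_eq_zero fun s hs => by
      rw [eq_zero_of_mem_degreeLT_zero hF hs, sq, zero_mul]
    have hform : ∑ s ∈ powersetCard (r + 1) U, F s * upDown U F s = 0 :=
      sum_eq_zero fun s hs => by rw [eq_zero_of_mem_degreeLT_zero hF hs, zero_mul]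
    rw [dirichletForm_eq, hsq, hform]
    simp
  | succ d ih =>
    obtain ⟨G, hG, horth⟩ := exists_mem_forall_sum_sub_mul_eq_zero
      (degreeLT d (powersetCard (r + 1) U)) (powersetCard (r + 1) U) F
    have hnonneg (f : Finset ι → ℝ) : 0 ≤ #U * ∑ s ∈ powersetCard (r + 1) U, f s ^ 2 :=
      mul_nonneg (Nat.cast_nonneg _) (sum_nonneg fun _ _ => sq_nonneg _)
    have hd : (0 : ℝ) ≤ d * (d - 1) := by
      rcases d with - | d
      · simp
      · push_cast
        rw [add_sub_cancel_right]
        positivity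
    have hcoef : (d : ℝ) * (#U + 1 - d) ≤ d * #U := by linarith
    calc dirichletForm U r F
        = dirichletForm U r G +
            2 * (d * (#U + 1 - d)) * ∑ s ∈ powersetCard (r + 1) U, (F s - G s) ^ 2 :=
          dirichletForm_eq_add hF hG horth
      _ ≤ 2 * (d - 1) * #U * ∑ s ∈ powersetCard (r + 1) U, G s ^ 2 +
            2 * (d * #U) * ∑ s ∈ powersetCard (r + 1) U, (F s - G s) ^ 2 := by
          refine add_le_add (ih hG) (mul_le_mul_of_nonneg_right ?_ ?_)
          · exact mul_le_mul_of_nonneg_left hcoef zero_le_two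
          · exact sum_nonneg fun _ _ => sq_nonneg _
      _ ≤ 2 * ((d + 1 : ℕ) - 1) * #U * ∑ s ∈ powersetCard (r + 1) U, F s ^ 2 := by
          rw [sum_sq_eq_add_of_orthogonal (horth G hG)]
          push_cast
          linarith [hnonneg G]

end EnergyBound

section Anticoncentration

variable {ι : Type*} [DecidableEq ι] {U : Finset ι} {F : Finset ι → ℝ} {d r : ℕ} {R : ℝ}

/-- On the slice of `r`-subsets of an `n`-set, the density and the co-density are at
least `1 / R`. -/
def IsBalanced (R : ℝ) (n r : ℕ) : Prop :=
  (n : ℝ) ≤ R * r ∧ (n : ℝ) ≤ R * (n - r)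

lemma entropySq_le_of_mem_degreeLT {X : ℝ} (hX : 0 ≤ X)
    (hLSI : 0 < r → r < #U → logSobolevConst #U r ≤ X) (hr : r ≤ #U)
    (hF : F ∈ degreeLT (d + 1) (powersetCard r U)) :
    entropySq (powersetCard r U) F ≤ 2 * d * X * ∑ s ∈ powersetCard r U, F s ^ 2 := by
  have hnonneg : 0 ≤ 2 * d * X * ∑ s ∈ powersetCard r U, F s ^ 2 :=
    mul_nonneg (by positivity) (sum_nonneg fun _ _ => sq_nonneg _)
  rcases r with - | r
  · rwa [entropySq_of_card_eq_one (by simp)]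
  rcases hr.eq_or_lt with hr | hr
  · rwa [entropySq_of_card_eq_one (by simp [← hr])]
  have hn : (0 : ℝ) < #U := by exact_mod_cast (by lia : 0 < #U)
  have hform := dirichletForm_le hF
  push_cast at hform
  rw [add_sub_cancel_right] at hform
  refine le_of_mul_le_mul_left ?_ hn
  calc #U * entropySq (powersetCard (r + 1) U) F
      ≤ logSobolevConst #U (r + 1) * dirichletForm U r F := card_mul_entropySq_le U hr F
    _ ≤ X * (2 * d * #U * ∑ s ∈ powersetCard (r + 1) U, F s ^ 2) := by
        have hX' := hLSI r.succ_pos hr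
        push_cast at hX'
        exact mul_le_mul hX' hform (dirichletForm_nonneg U r F) hX
    _ = #U * (2 * d * X * ∑ s ∈ powersetCard (r + 1) U, F s ^ 2) := by ring

lemma log_lower_bound (hR : 4 ≤ R) : 1.386 ≤ Real.log R := by
  have hlog : Real.log ((2 : ℝ) ^ 2) ≤ Real.log R :=
    Real.log_le_log (by norm_num) (by linarith)
  rw [Real.log_pow] at hlog
  push_cast at hlog
  linarith [Real.log_two_gt_d9]

lemma logSobolevConst_le {n : ℕ} (hR : 4 ≤ R) (h0 : 0 < r) (hn : r < n)
    (hbal : IsBalanced (3 * R) n r) : logSobolevConst n r ≤ 16 * Real.log R := by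
  have hr : (0 : ℝ) < r := by exact_mod_cast h0
  have hnr : (0 : ℝ) < n - r := sub_pos.2 (by exact_mod_cast hn)
  have hlog {x : ℝ} (hx : 0 < x) (hnx : n ≤ 3 * R * x) :
      Real.log n ≤ Real.log 3 + Real.log R + Real.log x := by
    rw [← Real.log_mul (by norm_num) (by linarith), ← Real.log_mul (by linarith) hx.ne']
    exact Real.log_le_log (by linarith) hnx
  rw [logSobolevConst]
  linarith [hlog hr hbal.1, hlog hnr hbal.2, Real.log_three_lt_d9, log_lower_bound hR]

lemma exp_le_pow (hR : 4 ≤ R) (d : ℕ) :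
    Real.exp (16 * (2 * d * (16 * Real.log R) + 1)) ≤ R ^ (512 * d + 12) := by
  rw [← Real.le_log_iff_exp_le (by positivity), Real.log_pow]
  push_cast
  linarith [log_lower_bound hR]

theorem sum_sq_le_of_card_mul_pow_le (hR : 4 ≤ R)
    (hbal : 0 < r → r < #U → IsBalanced (3 * R) #U r)
    (hF : F ∈ degreeLT (d + 1) (powersetCard r U)) {ℬ : Finset (Finset ι)}
    (hℬ : ℬ ⊆ powersetCard r U) (hsmall : #ℬ * R ^ (512 * d + 12) ≤ (#U).choose r) :
    ∑ s ∈ ℬ, F s ^ 2 ≤ (∑ s ∈ powersetCard r U, F s ^ 2) / 16 := by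
  rcases lt_or_ge #U r with hr | hr
  · have hempty := powersetCard_eq_empty.2 hr
    rw [hempty] at hℬ ⊢
    simp [subset_empty.1 hℬ]
  have hlog : 0 ≤ Real.log R := Real.log_nonneg (by linarith)
  have hent := entropySq_le_of_mem_degreeLT (X := 16 * Real.log R) (by positivity)
    (fun h0 hn => logSobolevConst_le hR h0 hn (hbal h0 hn)) hr hF
  have hset := mul_sum_sq_le_entropySq_add hℬ F
    (t := 16 * (2 * d * (16 * Real.log R) + 1)) <| by
      rw [card_powersetCard]
      exact (mul_le_mul_of_nonneg_left (exp_le_pow hR d) (Nat.cast_nonneg _)).trans hsmall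
  have hpos : 0 < 2 * d * (16 * Real.log R) + 1 := by positivity
  refine le_of_mul_le_mul_left ?_ hpos
  linarith

lemma card_filter_ne_zero_le_sum_sq {α : Type*} (s : Finset α) (D : α → ℤ) :
    (#{x ∈ s | D x ≠ 0} : ℝ) ≤ ∑ x ∈ s, (D x : ℝ) ^ 2 := by
  rw [card_filter, Nat.cast_sum]
  refine sum_le_sum fun x _ => ?_
  split_ifs with h
  · exact_mod_cast (sq_pos_of_ne_zero h : 0 < D x ^ 2)
  · exact_mod_cast sq_nonneg (D x)

theorem eq_zero_of_sum_sq_mul_pow_le {D : Finset ι → ℤ} (hR : 4 ≤ R)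
    (hbal : 0 < r → r < #U → IsBalanced (3 * R) #U r)
    (hD : (fun s => (D s : ℝ)) ∈ degreeLT (d + 1) (powersetCard r U))
    (hsmall : (∑ s ∈ powersetCard r U, (D s : ℝ) ^ 2) * R ^ (512 * d + 12) ≤ (#U).choose r)
    {s : Finset ι} (hs : s ∈ powersetCard r U) : D s = 0 := by
  have hsupp := sum_sq_le_of_card_mul_pow_le hR hbal hD
    (filter_subset (fun s => D s ≠ 0) (powersetCard r U)) <|
      (mul_le_mul_of_nonneg_right (card_filter_ne_zero_le_sum_sq _ D) (by positivity)).trans hsmall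
  rw [sum_filter_of_ne fun s _ => mt fun h : D s = 0 => by simp [h]] at hsupp
  have hnonneg : ∀ s ∈ powersetCard r U, 0 ≤ (D s : ℝ) ^ 2 := fun _ _ => sq_nonneg _
  have hsum : ∑ s ∈ powersetCard r U, (D s : ℝ) ^ 2 = 0 := by linarith [sum_nonneg hnonneg]
  simpa using (sum_eq_zero_iff_of_nonneg hnonneg).1 hsum s hs

theorem eq_of_sum_sub_sq_le {f F G : Finset ι → ℤ} {B : ℝ} (hR : 4 ≤ R)
    (hbal : 0 < r → r < #U → IsBalanced (3 * R) #U r)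
    (hF : (fun s => (F s : ℝ)) ∈ degreeLT (d + 1) (powersetCard r U))
    (hG : (fun s => (G s : ℝ)) ∈ degreeLT (d + 1) (powersetCard r U))
    (hfF : ∑ s ∈ powersetCard r U, (f s - F s : ℝ) ^ 2 ≤ B)
    (hfG : ∑ s ∈ powersetCard r U, (f s - G s : ℝ) ^ 2 ≤ B)
    (hB : 4 * B * R ^ (512 * d + 12) ≤ (#U).choose r) {s : Finset ι}
    (hs : s ∈ powersetCard r U) : F s = G s := by
  have hsum : ∑ s ∈ powersetCard r U, ((F s - G s : ℤ) : ℝ) ^ 2 ≤ 4 * B :=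
    calc ∑ s ∈ powersetCard r U, ((F s - G s : ℤ) : ℝ) ^ 2
        ≤ ∑ s ∈ powersetCard r U, (2 * (f s - F s : ℝ) ^ 2 + 2 * (f s - G s : ℝ) ^ 2) := by
          refine sum_le_sum fun s _ => ?_
          push_cast
          linarith [sq_nonneg ((f s - F s : ℝ) + (f s - G s))]
      _ ≤ 4 * B := by
          rw [sum_add_distrib, ← mul_sum, ← mul_sum]
          linarith
  have hFG : (fun s => ((F s - G s : ℤ) : ℝ)) ∈ degreeLT (d + 1) (powersetCard r U) :=
    (mem_degreeLT_congr fun s _ => by simp).2 (sub_mem hF hG)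
  exact sub_eq_zero.1 (eq_zero_of_sum_sq_mul_pow_le hR hbal hFG
    ((mul_le_mul_of_nonneg_right hsum (by positivity)).trans hB) hs)

/-- Off the small set where `F` and `G` differ, `F - q` is `G - q`, and on that set `q - G` is
negligible. -/
theorem sum_sub_sq_le_two_mul_of_mem_degreeLT {F G : Finset ι → ℤ} {q : Finset ι → ℝ} (hR : 4 ≤ R)
    (hbal : 0 < r → r < #U → IsBalanced (3 * R) #U r)
    (hq : q ∈ degreeLT (d + 1) (powersetCard r U))
    (hG : (fun s => (G s : ℝ)) ∈ degreeLT (d + 1) (powersetCard r U))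
    (hsmall : (∑ s ∈ powersetCard r U, (F s - G s : ℝ) ^ 2) * R ^ (512 * d + 12) ≤
      (#U).choose r) :
    ∑ s ∈ powersetCard r U, (F s - G s : ℝ) ^ 2 ≤
      2 * ∑ s ∈ powersetCard r U, (F s - q s) ^ 2 := by
  set 𝒜 := powersetCard r U
  have hcard : (#{s ∈ 𝒜 | F s ≠ G s} : ℝ) ≤ ∑ s ∈ 𝒜, (F s - G s : ℝ) ^ 2 := by
    simpa [sub_eq_zero] using card_filter_ne_zero_le_sum_sq 𝒜 fun s => F s - G s
  have hanti := sum_sq_le_of_card_mul_pow_le hR hbal (sub_mem hq hG)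
    (filter_subset (fun s => F s ≠ G s) 𝒜)
    ((mul_le_mul_of_nonneg_right hcard (by positivity)).trans hsmall)
  simp only [Pi.sub_apply] at hanti
  have hqG := sum_filter_add_sum_filter_not 𝒜 (fun s => F s ≠ G s) fun s => (q s - G s) ^ 2
  have hFq := sum_filter_add_sum_filter_not 𝒜 (fun s => F s ≠ G s) fun s => (F s - q s) ^ 2
  have hFG : ∑ s ∈ 𝒜, (F s - G s : ℝ) ^ 2 = ∑ s ∈ 𝒜 with F s ≠ G s, (F s - G s : ℝ) ^ 2 :=
    (sum_filter_of_ne fun s _ => mt fun h : F s = G s => by simp [h]).symm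
  have hagree : ∑ s ∈ 𝒜 with ¬F s ≠ G s, (q s - G s) ^ 2 =
      ∑ s ∈ 𝒜 with ¬F s ≠ G s, (F s - q s) ^ 2 := by
    refine sum_congr rfl fun s hs => ?_
    rw [not_not.1 (mem_filter.1 hs).2, sub_sq_comm]
  have hdisagree : ∑ s ∈ 𝒜 with F s ≠ G s, (F s - G s : ℝ) ^ 2 ≤
      2 * ∑ s ∈ 𝒜 with F s ≠ G s, (F s - q s) ^ 2 +
        2 * ∑ s ∈ 𝒜 with F s ≠ G s, (q s - G s) ^ 2 := by
    rw [mul_sum, mul_sum, ← sum_add_distrib]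
    refine sum_le_sum fun s _ => ?_
    linarith [sq_nonneg ((F s - q s) - (q s - G s))]
  have hnonneg : 0 ≤ ∑ s ∈ 𝒜 with ¬F s ≠ G s, (F s - q s) ^ 2 :=
    sum_nonneg fun _ _ => sq_nonneg _
  linarith

end Anticoncentration

section DiscreteDerivative

variable {ι : Type*} [DecidableEq ι] {U : Finset ι} {F : Finset ι → ℝ} {d r : ℕ} {i j : ι}

/-- The adjoint of the discrete derivative `F ↦ fun t => F (insert i t) - F (insert j t)`. -/
def derivAdjoint (i j : ι) : (Finset ι → ℝ) →ₗ[ℝ] Finset ι → ℝ where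
  toFun H s := (if i ∈ s ∧ j ∉ s then H (s.erase i) else 0) -
    if j ∈ s ∧ i ∉ s then H (s.erase j) else 0
  map_add' F G := by
    ext s
    simp only [Pi.add_apply]
    split_ifs <;> ring
  map_smul' c F := by
    ext s
    simp only [Pi.smul_apply, smul_eq_mul, RingHom.id_apply]
    split_ifs <;> ring

lemma derivAdjoint_apply (i j : ι) (H : Finset ι → ℝ) (s : Finset ι) :
    derivAdjoint i j H s = (if i ∈ s ∧ j ∉ s then H (s.erase i) else 0) -
      if j ∈ s ∧ i ∉ s then H (s.erase j) else 0 :=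
  rfl

lemma derivAdjoint_insert_left {t : Finset ι} (H : Finset ι → ℝ) (hij : i ≠ j) (hi : i ∉ t)
    (hj : j ∉ t) : derivAdjoint i j H (insert i t) = H t := by
  simp [derivAdjoint_apply, hi, hj, hij.symm]

lemma derivAdjoint_insert_right {t : Finset ι} (H : Finset ι → ℝ) (hij : i ≠ j) (hi : i ∉ t)
    (hj : j ∉ t) : derivAdjoint i j H (insert j t) = -H t := by
  simp [derivAdjoint_apply, hi, hj, hij]

lemma derivAdjoint_of_mem_iff_mem {s : Finset ι} (H : Finset ι → ℝ) (h : i ∈ s ↔ j ∈ s) :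
    derivAdjoint i j H s = 0 := by
  simp [derivAdjoint_apply, h]

lemma sum_mul_derivAdjoint (hi : i ∈ U) (hj : j ∈ U.erase i) (F H : Finset ι → ℝ) :
    ∑ s ∈ powersetCard (r + 1) U, F s * derivAdjoint i j H s =
      ∑ t ∈ powersetCard r ((U.erase i).erase j), (F (insert i t) - F (insert j t)) * H t := by
  have hij : i ≠ j := (ne_of_mem_erase hj).symm
  have hmem {m : ℕ} {t : Finset ι} (ht : t ∈ powersetCard m ((U.erase i).erase j)) :
      i ∉ t ∧ j ∉ t :=
    ⟨notMem_of_mem_powersetCard_erase (powersetCard_erase_subset _ _ _ ht),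
      notMem_of_mem_powersetCard_erase ht⟩
  have hzero : ∑ s ∈ powersetCard (r + 1) ((U.erase i).erase j),
      F s * derivAdjoint i j H s = 0 :=
    sum_eq_zero fun s hs => by
      rw [derivAdjoint_of_mem_iff_mem H (iff_of_false (hmem hs).1 (hmem hs).2), mul_zero]
  have hsub : ∑ t ∈ powersetCard r ((U.erase i).erase j),
        F (insert i t) * derivAdjoint i j H (insert i t) =
      ∑ t ∈ powersetCard r (U.erase i), F (insert i t) * derivAdjoint i j H (insert i t) := by
    refine sum_subset (powersetCard_erase_subset _ _ _) fun t ht htj => ?_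
    have hjt : j ∈ t := by
      by_contra hjt
      rw [mem_powersetCard] at ht htj
      exact htj ⟨subset_erase.2 ⟨ht.1, hjt⟩, ht.2⟩
    rw [derivAdjoint_of_mem_iff_mem H (by simp [hjt]), mul_zero]
  rw [sum_powersetCard_succ hi, sum_powersetCard_succ hj, hzero, add_zero, ← hsub,
    ← sum_add_distrib]
  refine sum_congr rfl fun t ht => ?_
  rw [derivAdjoint_insert_left H hij (hmem ht).1 (hmem ht).2,
    derivAdjoint_insert_right H hij (hmem ht).1 (hmem ht).2]
  ring

lemma derivAdjoint_andIndicator {T : Finset ι} (hi : i ∉ T) (hj : j ∉ T) :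
    derivAdjoint i j (andIndicator T) = andIndicator (insert i T) - andIndicator (insert j T) := by
  ext s
  have herase {a : ι} (ha : a ∉ T) : T ⊆ s.erase a ↔ T ⊆ s := by simp [subset_erase, ha]
  simp only [derivAdjoint_apply, Pi.sub_apply, andIndicator, herase hi, herase hj,
    insert_subset_iff]
  by_cases his : i ∈ s <;> by_cases hjs : j ∈ s <;> simp [his, hjs]

lemma derivAdjoint_andIndicator_of_mem {T : Finset ι} (hT : i ∈ T ∨ j ∈ T) :
    derivAdjoint i j (andIndicator T) = 0 := by
  ext s
  rw [derivAdjoint_apply, Pi.zero_apply]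
  have hzero {a b : ι} (hT : a ∈ T ∨ b ∈ T) (h : a ∈ s ∧ b ∉ s) :
      andIndicator T (s.erase a) = 0 := by
    refine if_neg fun hTs => ?_
    rcases hT with ha | hb
    · exact notMem_erase a s (hTs ha)
    · exact h.2 (mem_of_mem_erase (hTs hb))
  rw [ite_eq_right_iff.2 (hzero hT), ite_eq_right_iff.2 (hzero hT.symm), sub_zero]

lemma derivAdjoint_mem_degreeLT {H : Finset ι → ℝ}
    (hH : H ∈ degreeLT d (powersetCard r ((U.erase i).erase j))) :
    derivAdjoint i j H ∈ degreeLT (d + 1) (powersetCard (r + 1) U) := by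
  refine map_mem_degreeLT (fun H hH s hs => ?_) (fun T hT => ?_) hH
  · have herase {a b : ι} (ha : a ∈ s) (hb : b ∉ s) :
        s.erase a ∈ powersetCard r ((U.erase a).erase b) := by
      obtain ⟨hsU, hcard⟩ := mem_powersetCard.1 (erase_mem_powersetCard hs ha)
      refine mem_powersetCard.2 ⟨subset_erase.2 ⟨subset_erase.2 ⟨hsU, ?_⟩, ?_⟩, hcard⟩
      · exact notMem_erase a s
      · exact fun h => hb (mem_of_mem_erase h)
    rw [derivAdjoint_apply, ite_eq_right_iff.2 fun h => hH _ (herase h.1 h.2),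
      ite_eq_right_iff.2 fun h => hH _ (erase_right_comm (a := j) ▸ herase h.1 h.2), sub_zero]
  · by_cases hT' : i ∈ T ∨ j ∈ T
    · rw [derivAdjoint_andIndicator_of_mem hT']
      exact zero_mem _
    · rw [not_or] at hT'
      have hcard (a : ι) : #(insert a T) < d + 1 := (card_insert_le a T).trans_lt (by lia)
      rw [derivAdjoint_andIndicator hT'.1 hT'.2]
      exact sub_mem (andIndicator_mem_degreeLT (hcard i)) (andIndicator_mem_degreeLT (hcard j))

lemma eq_of_forall_insert_eq_insert {β : Type*} {Q : Finset ι → β}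
    (h : ∀ t ∈ powersetCard r U, ∀ a ∈ U \ t, ∀ c ∈ U \ t, Q (insert a t) = Q (insert c t))
    {s t : Finset ι} (hs : s ∈ powersetCard (r + 1) U) (ht : t ∈ powersetCard (r + 1) U) :
    Q s = Q t := by
  induction hm : #(s \ t) generalizing s with
  | zero =>
    rw [card_eq_zero, sdiff_eq_empty_iff_subset] at hm
    rw [mem_powersetCard] at hs ht
    rw [eq_of_subset_of_card_le hm (hs.2.symm ▸ ht.2.le)]
  | succ m ih =>
    obtain ⟨a, ha⟩ : (s \ t).Nonempty := card_pos.1 (by lia)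
    obtain ⟨c, hc⟩ : (t \ s).Nonempty := by
      rw [mem_powersetCard] at hs ht
      rw [← card_pos, ← card_sdiff_comm (hs.2.trans ht.2.symm)]
      lia
    rw [mem_sdiff] at ha hc
    have hsa := erase_mem_powersetCard hs ha.1
    have hcsa : c ∉ s.erase a := fun h => hc.2 (mem_of_mem_erase h)
    have haU : a ∈ U := (mem_powersetCard.1 hs).1 ha.1
    have hcU : c ∈ U := (mem_powersetCard.1 ht).1 hc.1
    have hs' : insert c (s.erase a) ∈ powersetCard (r + 1) U := by
      rw [mem_powersetCard] at hsa ⊢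
      exact ⟨insert_subset hcU hsa.1, by rw [card_insert_of_notMem hcsa, hsa.2]⟩
    have hcard : #(insert c (s.erase a) \ t) = m := by
      rw [insert_sdiff_of_mem _ hc.1, erase_sdiff_comm,
        card_erase_of_mem (mem_sdiff.2 ha), hm, Nat.add_sub_cancel]
    rw [← ih hs' hcard, ← h _ hsa a (mem_sdiff.2 ⟨haU, notMem_erase a s⟩) c
      (mem_sdiff.2 ⟨hcU, hcsa⟩), insert_erase ha.1]

lemma insert_eq_insert_of_forall_pivot {β : Type*} {Q : Finset ι → β} (hi : i ∈ U)
    (h : ∀ j ∈ U.erase i, ∀ t ∈ powersetCard r ((U.erase i).erase j),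
      Q (insert i t) = Q (insert j t)) :
    ∀ t ∈ powersetCard r U, ∀ a ∈ U \ t, ∀ c ∈ U \ t, Q (insert a t) = Q (insert c t) := by
  have hpivot {a : ι} {t : Finset ι} (ht : #t = r) (htU : t ⊆ U) (hit : i ∉ t) (ha : a ∈ U \ t) :
      Q (insert i t) = Q (insert a t) := by
    rw [mem_sdiff] at ha
    rcases eq_or_ne a i with rfl | hai
    · rfl
    · exact h a (mem_erase.2 ⟨hai, ha.1⟩) t
        (mem_powersetCard.2 ⟨subset_erase.2 ⟨subset_erase.2 ⟨htU, hit⟩, ha.2⟩, ht⟩)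
  intro t ht a ha c hc
  obtain ⟨htU, hcard⟩ := mem_powersetCard.1 ht
  by_cases hit : i ∈ t
  swap
  · rw [← hpivot hcard htU hit ha, ← hpivot hcard htU hit hc]
  rcases eq_or_ne a c with rfl | hac
  · rfl
  -- Trade `i` for `c` in `insert a t`, and for `a` in `insert c t`.
  have htrade {a c : ι} (ha : a ∈ U \ t) (hc : c ∈ U \ t) (hac : a ≠ c) :
      Q (insert a t) = Q (insert c (insert a (t.erase i))) := by
    rw [mem_sdiff] at ha hc
    have hia : i ≠ a := fun h => ha.2 (h ▸ hit)
    rw [← hpivot (t := insert a (t.erase i)) _ _ _ _, insert_comm, insert_erase hit]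
    · rw [card_insert_of_notMem fun h => ha.2 (mem_of_mem_erase h), card_erase_add_one hit, hcard]
    · exact insert_subset ha.1 ((erase_subset i t).trans htU)
    · simp [hia]
    · simp [hc.1, hc.2, hac.symm]
  rw [htrade ha hc hac, htrade hc ha hac.symm, insert_comm]

/-- The component of `F` orthogonal to the functions of degree at most `d` is constant: its
derivatives have degree less than `d`, hence are orthogonal to themselves by `derivAdjoint`. -/
theorem mem_degreeLT_of_forall_sub_insert_mem (hi : i ∈ U)
    (h : ∀ j ∈ U.erase i, (fun t => F (insert i t) - F (insert j t)) ∈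
      degreeLT d (powersetCard r ((U.erase i).erase j))) :
    F ∈ degreeLT (d + 1) (powersetCard (r + 1) U) := by
  obtain ⟨P, hP, horth⟩ := exists_mem_forall_sum_sub_mul_eq_zero
    (degreeLT (d + 1) (powersetCard (r + 1) U)) (powersetCard (r + 1) U) F
  have hderiv : ∀ j ∈ U.erase i, ∀ t ∈ powersetCard r ((U.erase i).erase j),
      (F - P) (insert i t) = (F - P) (insert j t) := by
    intro j hj
    set D : Finset ι → ℝ := fun t => (F - P) (insert i t) - (F - P) (insert j t) with hDdef
    have hD : D ∈ degreeLT d (powersetCard r ((U.erase i).erase j)) := by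
      refine (mem_degreeLT_congr fun t _ => ?_).2 (sub_mem (h j hj)
        (sub_insert_mem_degreeLT hi (mem_of_mem_erase hj) (ne_of_mem_erase hj).symm hP))
      simp only [hDdef, Pi.sub_apply]
      ring
    have hsum : ∑ t ∈ powersetCard r ((U.erase i).erase j), D t * D t = 0 := by
      rw [← horth _ (derivAdjoint_mem_degreeLT hD)]
      exact (sum_mul_derivAdjoint hi hj (F - P) D).symm
    intro t ht
    exact sub_eq_zero.1 (mul_self_eq_zero.1
      ((sum_eq_zero_iff_of_nonneg fun _ _ => mul_self_nonneg _).1 hsum t ht))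
  have hconst : F - P ∈ degreeLT (d + 1) (powersetCard (r + 1) U) := by
    rcases (powersetCard (r + 1) U).eq_empty_or_nonempty with hempty | ⟨s, hs⟩
    · exact mem_degreeLT_of_eq_zero fun s hs => by simp [hempty] at hs
    · refine (mem_degreeLT_congr fun t ht => ?_).2 (const_mem_degreeLT d ((F - P) s))
      exact eq_of_forall_insert_eq_insert (insert_eq_insert_of_forall_pivot hi hderiv) ht hs
  rw [← sub_add_cancel F P]
  exact add_mem hconst hP

end DiscreteDerivative

section RoundingEstimates

variable {ι : Type*} [DecidableEq ι] {U : Finset ι} {n r d : ℕ} {R ε : ℝ} {i j : ι}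

lemma IsBalanced.scale {c : ℝ} {m s : ℕ} (h : IsBalanced R m s) (hR : 0 ≤ R) (hnm : n ≤ m)
    (hs : (s : ℝ) ≤ c * r) (hms : (m - s : ℝ) ≤ c * (n - r)) : IsBalanced (c * R) n r := by
  have hnm' : (n : ℝ) ≤ m := by exact_mod_cast hnm
  constructor
  · linarith [h.1, mul_le_mul_of_nonneg_left hs hR]
  · linarith [h.2, mul_le_mul_of_nonneg_left hms hR]

lemma choose_succ_succ_le_mul (h : (n + 1 : ℝ) ≤ R * (r + 1)) :
    ((n + 1).choose (r + 1) : ℝ) ≤ R * n.choose r := by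
  have hchoose : ((n + 1) * n.choose r : ℝ) = (n + 1).choose (r + 1) * (r + 1) := by
    exact_mod_cast Nat.add_one_mul_choose_eq n r
  refine le_of_mul_le_mul_right ?_ (by positivity : (0 : ℝ) < r + 1)
  linarith [mul_le_mul_of_nonneg_right h (n.choose r).cast_nonneg]

lemma cast_choose_mul_succ_eq (hr : r ≤ n) :
    (n.choose r * (n + 1) : ℝ) = (n + 1).choose r * (n + 1 - r) := by
  have hchoose := congrArg (Nat.cast : ℕ → ℝ) (Nat.choose_mul_succ_eq n r)
  push_cast [Nat.cast_sub (show r ≤ n + 1 by lia)] at hchoose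
  exact hchoose

lemma choose_succ_le_mul (hr : r ≤ n) (h : (n + 1 : ℝ) ≤ R * (n + 1 - r)) :
    ((n + 1).choose r : ℝ) ≤ R * n.choose r := by
  have hpos : (0 : ℝ) < n + 1 - r := by
    have : (r : ℝ) ≤ n := by exact_mod_cast hr
    linarith
  refine le_of_mul_le_mul_right ?_ hpos
  linarith [mul_le_mul_of_nonneg_right h (n.choose r).cast_nonneg, cast_choose_mul_succ_eq hr]

lemma IsBalanced.choose_le (h : IsBalanced R (n + 2) (r + 1)) (hR : 0 ≤ R) (hr : r ≤ n) :
    ((n + 2).choose (r + 1) : ℝ) ≤ R ^ 2 * n.choose r := by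
  obtain ⟨hlow, hhigh⟩ := h
  push_cast at hlow hhigh
  calc ((n + 2).choose (r + 1) : ℝ) ≤ R * (n + 1).choose r :=
        choose_succ_succ_le_mul (by push_cast; linarith)
    _ ≤ R * (R * n.choose r) := by
        gcongr
        exact choose_succ_le_mul hr (by linarith)
    _ = R ^ 2 * n.choose r := by ring

lemma one_add_inv_pow_mul_le (d : ℕ) : (1 + (d : ℝ)⁻¹) ^ (1000 * d) ≤ 4 ^ 800 :=
  calc (1 + (d : ℝ)⁻¹) ^ (1000 * d) = ((1 + (d : ℝ)⁻¹) ^ d) ^ (5 * 200) := by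
        rw [← pow_mul, mul_comm d]
    _ ≤ 3 ^ (5 * 200) := by
        gcongr
        exact Real.one_add_inv_pow_le_exp.trans (by linarith [Real.exp_one_lt_d9])
    _ = (3 ^ 5) ^ 200 := pow_mul 3 5 200
    _ ≤ (4 ^ 4) ^ 200 := by gcongr; norm_num
    _ = 4 ^ 800 := (pow_mul 4 4 200).symm

lemma two_mul_sq_mul_pow_le (hR : 4 ≤ R) (d : ℕ) :
    2 * R ^ 2 * ((1 + (d : ℝ)⁻¹) * R) ^ (1000 * d) ≤ R ^ (1000 * (d + 1)) :=
  calc 2 * R ^ 2 * ((1 + (d : ℝ)⁻¹) * R) ^ (1000 * d)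
      = 2 * R ^ 2 * ((1 + (d : ℝ)⁻¹) ^ (1000 * d) * R ^ (1000 * d)) := by rw [mul_pow]
    _ ≤ R ^ 198 * R ^ 2 * (R ^ 800 * R ^ (1000 * d)) := by
        gcongr
        · linarith [le_self_pow₀ (show 1 ≤ R by linarith) (show 198 ≠ 0 by norm_num)]
        · exact (one_add_inv_pow_mul_le d).trans (by gcongr)
    _ = R ^ (1000 * (d + 1)) := by
        simp only [← pow_add]
        congr 1
        lia

lemma mul_pow_le_of_le_pow_mul {S : ℝ} {m N : ℕ} (hR : 4 ≤ R) (hε : 0 ≤ ε)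
    (hsmall : ε * R ^ (1000 * (d + 1)) ≤ 1) (hm : m ≤ 488) (hS : S ≤ R ^ m * (ε * N)) :
    S * R ^ (512 * d + 12) ≤ N :=
  calc S * R ^ (512 * d + 12) ≤ R ^ m * (ε * N) * R ^ (512 * d + 12) := by gcongr
    _ = ε * R ^ (m + (512 * d + 12)) * N := by ring
    _ ≤ ε * R ^ (1000 * (d + 1)) * N := by
        gcongr
        · linarith
        · lia
    _ ≤ N := mul_le_of_le_one_left N.cast_nonneg hsmall

lemma sum_insert_le {f : Finset ι → ℝ} (hi : i ∈ U) (hf : ∀ s, 0 ≤ f s) :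
    ∑ t ∈ powersetCard r (U.erase i), f (insert i t) ≤ ∑ s ∈ powersetCard (r + 1) U, f s := by
  rw [sum_powersetCard_succ hi]
  have hnonneg : 0 ≤ ∑ s ∈ powersetCard (r + 1) (U.erase i), f s := sum_nonneg fun _ _ => hf _
  linarith

lemma sum_sub_insert_sq_le (hi : i ∈ U) (hj : j ∈ U.erase i) (e : Finset ι → ℝ) :
    ∑ t ∈ powersetCard r ((U.erase i).erase j), (e (insert i t) - e (insert j t)) ^ 2 ≤
      2 * ∑ s ∈ powersetCard (r + 1) U, e s ^ 2 :=
  calc ∑ t ∈ powersetCard r ((U.erase i).erase j), (e (insert i t) - e (insert j t)) ^ 2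
      ≤ ∑ t ∈ powersetCard r ((U.erase i).erase j),
          (2 * e (insert i t) ^ 2 + 2 * e (insert j t) ^ 2) := by
        refine sum_le_sum fun t _ => ?_
        linarith [sq_nonneg (e (insert i t) + e (insert j t))]
    _ = 2 * ∑ t ∈ powersetCard r ((U.erase i).erase j), e (insert i t) ^ 2 +
          2 * ∑ t ∈ powersetCard r ((U.erase i).erase j), e (insert j t) ^ 2 := by
        rw [sum_add_distrib, mul_sum, mul_sum]
    _ ≤ 2 * ∑ t ∈ powersetCard r (U.erase i), e (insert i t) ^ 2 +
          2 * ∑ s ∈ powersetCard (r + 1) (U.erase i), e s ^ 2 := by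
        gcongr
        · exact powersetCard_erase_subset _ r j
        · exact sum_insert_le (f := fun s => e s ^ 2) hj fun _ => sq_nonneg _
    _ = 2 * ∑ s ∈ powersetCard (r + 1) U, e s ^ 2 := by rw [sum_powersetCard_succ hi]; ring

lemma exists_sum_powersetCard_erase_le {e : Finset ι → ℝ} (hU : #U = n + 1) (hr : r ≤ n)
    (he : ∑ s ∈ powersetCard r U, e s ≤ ε * (n + 1).choose r) :
    ∃ i ∈ U, ∑ s ∈ powersetCard r (U.erase i), e s ≤ ε * n.choose r := by
  have hr' : (r : ℝ) ≤ n := by exact_mod_cast hr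
  refine exists_le_of_sum_le (card_pos.1 (by lia)) ?_
  rw [sum_sum_powersetCard_erase_eq_mul, sum_const, nsmul_eq_mul, hU]
  push_cast
  calc (n + 1 - r) * ∑ s ∈ powersetCard r U, e s
      ≤ (n + 1 - r) * (ε * (n + 1).choose r) :=
        mul_le_mul_of_nonneg_left he (by linarith)
    _ = ε * ((n + 1).choose r * (n + 1 - r)) := by ring
    _ = (n + 1) * (ε * n.choose r) := by rw [← cast_choose_mul_succ_eq hr]; ring

lemma sum_powersetCard_le_mul {e : Finset ι → ℝ} {B : ℝ} (hr : r < #U)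
    (hR : (#U : ℝ) ≤ R * (#U - r)) (hB : 0 ≤ B)
    (he : ∀ i ∈ U, ∑ s ∈ powersetCard r (U.erase i), e s ≤ B) :
    ∑ s ∈ powersetCard r U, e s ≤ R * B := by
  have hpos : (0 : ℝ) < #U - r := sub_pos.2 (by exact_mod_cast hr)
  have hsum := sum_le_sum he
  rw [sum_sum_powersetCard_erase_eq_mul, sum_const, nsmul_eq_mul] at hsum
  refine le_of_mul_le_mul_left ?_ hpos
  linarith [mul_le_mul_of_nonneg_right hR hB]

end RoundingEstimates

section Rounding

variable {ι : Type*} [DecidableEq ι] {U V : Finset ι} {n r d : ℕ} {R ε E : ℝ} {i j : ι}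
  {F : Finset ι → ℤ}

/-- Every integer-valued function on the slice `powersetCard r U` that is `ε`-close in mean square
to a real-valued function of degree less than `K` is `2 * ε`-close to an integer-valued one,
provided that `ε` is small compared to the density of the slice (which only matters when
`K ≤ r ≤ #U - K`, for otherwise every function has degree less than `K`). -/
def HasRounding (K : ℕ) (U : Finset ι) (r : ℕ) : Prop :=
  ∀ (R ε : ℝ) (F : Finset ι → ℤ), ∀ q ∈ degreeLT K (powersetCard r U), 4 ≤ R →
    (K ≤ r → K + r ≤ #U → IsBalanced R #U r) → ε * R ^ (1000 * K) ≤ 1 →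
    ∑ s ∈ powersetCard r U, (F s - q s) ^ 2 ≤ ε * (#U).choose r →
    ∃ G : Finset ι → ℤ, (fun s => (G s : ℝ)) ∈ degreeLT K (powersetCard r U) ∧
      ∑ s ∈ powersetCard r U, (F s - G s : ℝ) ^ 2 ≤ 2 * (ε * (#U).choose r)

lemma isBalanced_one_add_inv_mul (hR : 4 ≤ R) (hd : 0 < d) (hdr : d ≤ r) (hdn : d + r ≤ n)
    (hbal : IsBalanced R (n + 2) (r + 1)) : IsBalanced ((1 + (d : ℝ)⁻¹) * R) n r := by
  have hd' : (0 : ℝ) < d := by exact_mod_cast hd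
  have hinv {x : ℝ} (hx : d ≤ x) : 1 ≤ (d : ℝ)⁻¹ * x := by rwa [← div_eq_inv_mul, one_le_div hd']
  have hlow := hinv (x := r) (by exact_mod_cast hdr)
  have hhigh := hinv (x := n - r) (by rw [le_sub_iff_add_le]; exact_mod_cast hdn)
  refine hbal.scale (by linarith) (by lia) ?_ ?_ <;> push_cast <;> linarith

lemma IsBalanced.erase (hbal : IsBalanced R (n + 2) (r + 1)) (hR : 4 ≤ R) (hn : 0 < n)
    (hr : 2 * (r + 1) ≤ n + 2) : IsBalanced R (n + 1) (r + 1) := by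
  have hn' : (1 : ℝ) ≤ n := by exact_mod_cast hn
  have hr' : (2 * (r + 1) : ℝ) ≤ n + 2 := by exact_mod_cast hr
  have hlow := hbal.1
  push_cast at hlow
  constructor <;> push_cast
  · linarith
  · linarith [mul_le_mul_of_nonneg_right hR (show (0 : ℝ) ≤ n + 1 - (r + 1) by linarith)]

/-- Passing to the smaller slice inflates the balance parameter by `1 + 1 / d`, so that its power
`1000 * d` only grows by a constant factor. -/
lemma exists_round_sub_insert {q : Finset ι → ℝ} (hi : i ∈ U) (hj : j ∈ U.erase i)
    (hU : #U = n + 2) (hr : r ≤ n) (hR : 4 ≤ R) (hε : 0 ≤ ε)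
    (hbal : IsBalanced R (n + 2) (r + 1)) (hsmall : ε * R ^ (1000 * (d + 1)) ≤ 1)
    (hround : HasRounding d ((U.erase i).erase j) r)
    (hq : q ∈ degreeLT (d + 1) (powersetCard (r + 1) U))
    (hF : ∑ s ∈ powersetCard (r + 1) U, (F s - q s) ^ 2 ≤ ε * (n + 2).choose (r + 1)) :
    ∃ H : Finset ι → ℤ,
      (fun t => (H t : ℝ)) ∈ degreeLT d (powersetCard r ((U.erase i).erase j)) ∧
      ∑ t ∈ powersetCard r ((U.erase i).erase j), (F (insert i t) - F (insert j t) - H t : ℝ) ^ 2 ≤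
        4 * R ^ 2 * (ε * (n + 2).choose (r + 1)) := by
  have hcard : #((U.erase i).erase j) = n := by
    rw [card_erase_of_mem hj, card_erase_of_mem hi, hU]; rfl
  have hdq := sub_insert_mem_degreeLT hi (mem_of_mem_erase hj) (ne_of_mem_erase hj).symm hq
  have herr : ∑ t ∈ powersetCard r ((U.erase i).erase j),
      (((F (insert i t) - F (insert j t) : ℤ) : ℝ) - (q (insert i t) - q (insert j t))) ^ 2 ≤
        2 * (ε * (n + 2).choose (r + 1)) := by
    refine le_trans (le_of_eq (sum_congr rfl fun t _ => ?_)) <|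
      (sum_sub_insert_sq_le hi hj fun s => F s - q s).trans
        (mul_le_mul_of_nonneg_left hF zero_le_two)
    push_cast
    ring
  rcases Nat.eq_zero_or_pos d with rfl | hd
  · refine ⟨0, mem_degreeLT_of_eq_zero fun _ _ => by simp, ?_⟩
    refine le_trans (le_of_eq (sum_congr rfl fun t ht => ?_)) <|
      herr.trans (mul_le_mul_of_nonneg_right (by nlinarith) (by positivity))
    rw [eq_zero_of_mem_degreeLT_zero hdq ht]
    simp
  · obtain ⟨H, hH, hHerr⟩ := hround ((1 + (d : ℝ)⁻¹) * R) (2 * R ^ 2 * ε)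
      (fun t => F (insert i t) - F (insert j t)) _ hdq
      (hR.trans (le_mul_of_one_le_left (by linarith) (by simp)))
      (fun hdr hdn => by
        rw [hcard] at hdn ⊢
        exact isBalanced_one_add_inv_mul hR hd hdr hdn hbal)
      (by linarith [mul_le_mul_of_nonneg_left (two_mul_sq_mul_pow_le hR d) hε])
      (by
        rw [hcard]
        linarith [mul_le_mul_of_nonneg_left (hbal.choose_le (by linarith) hr) hε])
    push_cast at hHerr
    have hchoose : n.choose r ≤ (n + 2).choose (r + 1) :=
      (Nat.choose_le_succ n r).trans (Nat.choose_succ_succ (n + 1) r ▸ Nat.le_add_right _ _)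
    refine ⟨H, hH, hHerr.trans ?_⟩
    rw [hcard]
    calc 2 * (2 * R ^ 2 * ε * n.choose r) ≤ 2 * (2 * R ^ 2 * ε * (n + 2).choose (r + 1)) := by
          gcongr
      _ = 4 * R ^ 2 * (ε * (n + 2).choose (r + 1)) := by ring

lemma sum_sub_insert_add_sq_le {f F G H : Finset ι → ℝ} (hj : j ∈ V) :
    ∑ t ∈ powersetCard r (V.erase j), (f t - (G (insert j t) + H t)) ^ 2 ≤
      2 * ∑ s ∈ powersetCard (r + 1) V, (F s - G s) ^ 2 +
        2 * ∑ t ∈ powersetCard r (V.erase j), (f t - F (insert j t) - H t) ^ 2 :=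
  calc ∑ t ∈ powersetCard r (V.erase j), (f t - (G (insert j t) + H t)) ^ 2
      ≤ ∑ t ∈ powersetCard r (V.erase j),
          (2 * (F (insert j t) - G (insert j t)) ^ 2 + 2 * (f t - F (insert j t) - H t) ^ 2) := by
        refine sum_le_sum fun t _ => ?_
        linarith [sq_nonneg ((F (insert j t) - G (insert j t)) - (f t - F (insert j t) - H t))]
    _ = 2 * ∑ t ∈ powersetCard r (V.erase j), (F (insert j t) - G (insert j t)) ^ 2 +
          2 * ∑ t ∈ powersetCard r (V.erase j), (f t - F (insert j t) - H t) ^ 2 := by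
        rw [sum_add_distrib, mul_sum, mul_sum]
    _ ≤ _ := by
        gcongr
        exact sum_insert_le (f := fun s => (F s - G s) ^ 2) hj fun _ => sq_nonneg _

lemma four_mul_mul_choose_le (hbal : IsBalanced R (n + 3) (r + 1)) (hR : 4 ≤ R) (hε : 0 ≤ ε)
    (hr : 2 * (r + 1) ≤ n + 3) :
    4 * ((4 + 8 * R ^ 2) * (ε * (n + 3).choose (r + 1))) ≤ R ^ 8 * (ε * n.choose r) := by
  have hchoose : ((n + 3).choose (r + 1) : ℝ) ≤ R ^ 2 * (2 * n.choose r) := by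
    refine (hbal.choose_le (n := n + 1) (by linarith) (by lia)).trans ?_
    gcongr
    refine choose_succ_le_mul (by lia) ?_
    have : (2 * (r + 1) : ℝ) ≤ n + 3 := by exact_mod_cast hr
    linarith
  have hpow : 4 * (4 + 8 * R ^ 2) * (2 * R ^ 2) ≤ R ^ 8 := by
    have hR2 : 16 ≤ R ^ 2 := by nlinarith
    have hR4 : 256 ≤ R ^ 4 := by nlinarith
    nlinarith [mul_le_mul_of_nonneg_left hR4 (show 0 ≤ R ^ 4 by positivity)]
  calc 4 * ((4 + 8 * R ^ 2) * (ε * (n + 3).choose (r + 1)))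
      ≤ 4 * ((4 + 8 * R ^ 2) * (ε * (R ^ 2 * (2 * n.choose r)))) := by gcongr
    _ = 4 * (4 + 8 * R ^ 2) * (2 * R ^ 2) * (ε * n.choose r) := by ring
    _ ≤ R ^ 8 * (ε * n.choose r) := by gcongr

lemma eq_of_sum_sub_sq_le_of_mem_erase {l : ι} {f G H : Finset ι → ℤ} (hj : j ∈ V)
    (hl : l ∈ V) (hjl : j ≠ l) (hV : #V = n + 2) (hr : 2 * (r + 1) ≤ n + 3) (hR : 4 ≤ R)
    (hε : 0 ≤ ε) (hbal : IsBalanced R (n + 3) (r + 1)) (hsmall : ε * R ^ (1000 * (d + 1)) ≤ 1)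
    (hE : E = ε * (n + 3).choose (r + 1))
    (hG : (fun t => (G t : ℝ)) ∈ degreeLT (d + 1) (powersetCard r (V.erase j)))
    (hH : (fun t => (H t : ℝ)) ∈ degreeLT (d + 1) (powersetCard r (V.erase l)))
    (hfG : ∑ t ∈ powersetCard r (V.erase j), (f t - G t : ℝ) ^ 2 ≤ (4 + 8 * R ^ 2) * E)
    (hfH : ∑ t ∈ powersetCard r (V.erase l), (f t - H t : ℝ) ^ 2 ≤ (4 + 8 * R ^ 2) * E)
    {t : Finset ι} (htj : t ∈ powersetCard r (V.erase j)) (htl : t ∈ powersetCard r (V.erase l)) :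
    G t = H t := by
  have ht : t ∈ powersetCard r ((V.erase j).erase l) := by
    rw [mem_powersetCard] at htj htl ⊢
    exact ⟨subset_erase.2 ⟨htj.1, (subset_erase.1 htl.1).2⟩, htj.2⟩
  have hcard : #((V.erase j).erase l) = n := by
    rw [card_erase_of_mem (mem_erase.2 ⟨hjl.symm, hl⟩), card_erase_of_mem hj, hV]; rfl
  have hsubG := powersetCard_erase_subset (V.erase j) r l
  have hsubH : powersetCard r ((V.erase j).erase l) ⊆ powersetCard r (V.erase l) := by
    rw [erase_right_comm]
    exact powersetCard_erase_subset (V.erase l) r j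
  have hrestrict {D : Finset ι → ℝ} {𝒜 : Finset (Finset ι)}
      (hsub : powersetCard r ((V.erase j).erase l) ⊆ 𝒜)
      (hD : ∑ t ∈ 𝒜, D t ^ 2 ≤ (4 + 8 * R ^ 2) * E) :
      ∑ t ∈ powersetCard r ((V.erase j).erase l), D t ^ 2 ≤ (4 + 8 * R ^ 2) * E :=
    (sum_le_sum_of_subset_of_nonneg hsub fun _ _ _ => sq_nonneg _).trans hD
  refine eq_of_sum_sub_sq_le hR (fun h0 hrn => ?_) (mem_degreeLT_of_subset hsubG hG)
    (mem_degreeLT_of_subset hsubH hH) (hrestrict hsubG hfG) (hrestrict hsubH hfH) ?_ ht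
  · rw [hcard] at hrn ⊢
    have h0' : (1 : ℝ) ≤ r := by exact_mod_cast h0
    have hrn' : (r + 1 : ℝ) ≤ n := by exact_mod_cast hrn
    refine hbal.scale (by linarith) (by lia) ?_ ?_ <;> push_cast <;> linarith
  · rw [hcard]
    exact mul_pow_le_of_le_pow_mul hR hε hsmall (by norm_num)
      (hE ▸ four_mul_mul_choose_le hbal hR hε hr)

lemma exists_eq_insert_of_forall_eq {β : Type*} (hi : i ∉ V) (G₀ : Finset ι → β)
    {K : ι → Finset ι → β}
    (hK : ∀ j ∈ V, ∀ l ∈ V, ∀ t, t ∈ powersetCard r (V.erase j) → t ∈ powersetCard r (V.erase l) →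
      K j t = K l t) :
    ∃ G : Finset ι → β, (∀ s, i ∉ s → G s = G₀ s) ∧
      ∀ j ∈ V, ∀ t ∈ powersetCard r (V.erase j), G (insert i t) = K j t := by
  refine ⟨fun s => if h : i ∈ s ∧ ∃ j ∈ V, s.erase i ∈ powersetCard r (V.erase j) then
    K h.2.choose (s.erase i) else G₀ s, fun s hs => dif_neg fun h => hs h.1, fun j hj t ht => ?_⟩
  have hit : (insert i t).erase i = t := erase_insert fun h =>
    hi (mem_of_mem_erase ((mem_powersetCard.1 ht).1 h))
  have hex : ∃ j ∈ V, (insert i t).erase i ∈ powersetCard r (V.erase j) := ⟨j, hj, by rwa [hit]⟩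
  dsimp only
  rw [dif_pos ⟨mem_insert_self i t, hex⟩]
  exact (hK _ hex.choose_spec.1 j hj _ hex.choose_spec.2 (by rwa [hit])).trans
    (congrArg (K j) hit)

/-- The rounded derivatives `H j` prescribe candidates `G₀ (insert j t) + H j t` for the values of
`G` at `insert i t`; where they agree, they glue to a function `G` of degree at most `d`. -/
lemma exists_mem_degreeLT_of_forall_eq {G₀ : Finset ι → ℤ} {H : ι → Finset ι → ℤ} (hi : i ∈ U)
    (hU : #U = n + 2) (hr : r ≤ n) (hR : 4 ≤ R) (hE : 0 ≤ E) (hbal : IsBalanced R (n + 2) (r + 1))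
    (hG₀ : ∑ s ∈ powersetCard (r + 1) (U.erase i), (F s - G₀ s : ℝ) ^ 2 ≤ 2 * E)
    (hH : ∀ j ∈ U.erase i,
      (fun t => (H j t : ℝ)) ∈ degreeLT d (powersetCard r ((U.erase i).erase j)))
    (herr : ∀ j ∈ U.erase i, ∑ t ∈ powersetCard r ((U.erase i).erase j),
      (F (insert i t) - (G₀ (insert j t) + H j t : ℤ) : ℝ) ^ 2 ≤ (4 + 8 * R ^ 2) * E)
    (heq : ∀ j ∈ U.erase i, ∀ l ∈ U.erase i, ∀ t, t ∈ powersetCard r ((U.erase i).erase j) →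
      t ∈ powersetCard r ((U.erase i).erase l) →
      G₀ (insert j t) + H j t = G₀ (insert l t) + H l t) :
    ∃ G : Finset ι → ℤ, (fun s => (G s : ℝ)) ∈ degreeLT (d + 1) (powersetCard (r + 1) U) ∧
      ∑ s ∈ powersetCard (r + 1) U, (F s - G s : ℝ) ^ 2 ≤ R ^ 5 * E := by
  obtain ⟨G, hGG₀, hGH⟩ := exists_eq_insert_of_forall_eq (notMem_erase i U) G₀ heq
  refine ⟨G, mem_degreeLT_of_forall_sub_insert_mem hi fun j hj =>
    (mem_degreeLT_congr fun t ht => ?_).2 (hH j hj), ?_⟩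
  · have hit : i ∉ insert j t := fun h => (mem_insert.1 h).elim
      (fun h => ne_of_mem_erase hj h.symm)
      fun h => notMem_erase i U (mem_of_mem_erase ((mem_powersetCard.1 ht).1 h))
    rw [hGH j hj t ht, hGG₀ _ hit]
    push_cast
    ring
  have hcard : #(U.erase i) = n + 1 := by rw [card_erase_of_mem hi, hU]; rfl
  have hwithout : ∑ s ∈ powersetCard (r + 1) (U.erase i), (F s - G s : ℝ) ^ 2 ≤ 2 * E := by
    refine (sum_congr rfl fun s hs => ?_).trans_le hG₀
    rw [hGG₀ s (notMem_of_mem_powersetCard_erase hs)]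
  have hwith : ∑ t ∈ powersetCard r (U.erase i), (F (insert i t) - G (insert i t) : ℝ) ^ 2 ≤
      R * ((4 + 8 * R ^ 2) * E) := by
    refine sum_powersetCard_le_mul (by lia) ?_ (by positivity) fun j hj => ?_
    · have := hbal.2
      push_cast [hcard] at this ⊢
      linarith
    · refine (sum_congr rfl fun t ht => ?_).trans_le (herr j hj)
      rw [hGH j hj t ht]
  have hpow : R * (4 + 8 * R ^ 2) + 2 ≤ R ^ 5 := by
    have hR2 : 16 ≤ R ^ 2 := by nlinarith
    have hR3 : 64 ≤ R ^ 3 := by nlinarith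
    nlinarith
  rw [sum_powersetCard_succ hi]
  linarith [mul_le_mul_of_nonneg_right hpow hE]

lemma exists_mem_degreeLT_sum_sub_sq_le {q : Finset ι → ℝ} {G₀ : Finset ι → ℤ} (hi : i ∈ U)
    (hU : #U = n + 2) (hr : 2 * (r + 1) ≤ n + 2) (hR : 4 ≤ R) (hε : 0 ≤ ε)
    (hbal : IsBalanced R (n + 2) (r + 1)) (hsmall : ε * R ^ (1000 * (d + 1)) ≤ 1)
    (hE : E = ε * (n + 2).choose (r + 1)) (hround : ∀ V : Finset ι, HasRounding d V r)
    (hq : q ∈ degreeLT (d + 1) (powersetCard (r + 1) U))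
    (hF : ∑ s ∈ powersetCard (r + 1) U, (F s - q s) ^ 2 ≤ E)
    (hG₀ : (fun s => (G₀ s : ℝ)) ∈ degreeLT (d + 1) (powersetCard (r + 1) (U.erase i)))
    (hG₀err : ∑ s ∈ powersetCard (r + 1) (U.erase i), (F s - G₀ s : ℝ) ^ 2 ≤ 2 * E) :
    ∃ G : Finset ι → ℤ, (fun s => (G s : ℝ)) ∈ degreeLT (d + 1) (powersetCard (r + 1) U) ∧
      ∑ s ∈ powersetCard (r + 1) U, (F s - G s : ℝ) ^ 2 ≤ R ^ 5 * E := by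
  have hcard : #(U.erase i) = n + 1 := by rw [card_erase_of_mem hi, hU]; rfl
  choose! H hH hHerr using fun j (hj : j ∈ U.erase i) =>
    exists_round_sub_insert hi hj hU (by lia) hR hε hbal hsmall (hround _) hq (hE ▸ hF)
  rw [← hE] at hHerr
  have hcand_mem : ∀ j ∈ U.erase i, (fun t => ((G₀ (insert j t) + H j t : ℤ) : ℝ)) ∈
      degreeLT (d + 1) (powersetCard r ((U.erase i).erase j)) := fun j hj =>
    (mem_degreeLT_congr fun t _ => by simp).2 <|
      add_mem (comp_insert_mem_degreeLT hj hG₀) (degreeLT_mono d.le_succ (hH j hj))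
  have hcand_err : ∀ j ∈ U.erase i, ∑ t ∈ powersetCard r ((U.erase i).erase j),
      (F (insert i t) - (G₀ (insert j t) + H j t : ℤ) : ℝ) ^ 2 ≤ (4 + 8 * R ^ 2) * E := by
    intro j hj
    push_cast
    linarith [hHerr j hj, sum_sub_insert_add_sq_le (r := r) (f := fun t => F (insert i t))
      (F := fun s => F s) (G := fun s => G₀ s) (H := fun t => H j t) hj]
  refine exists_mem_degreeLT_of_forall_eq hi hU (by lia) hR (hE ▸ by positivity) hbal hG₀err hH
    hcand_err fun j hj l hl t htj htl => ?_
  rcases eq_or_ne j l with rfl | hjl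
  · rfl
  obtain ⟨n, rfl⟩ : ∃ m, n = m + 1 := by
    have := one_lt_card.2 ⟨j, hj, l, hl, hjl⟩
    exact ⟨n - 1, by lia⟩
  exact eq_of_sum_sub_sq_le_of_mem_erase (f := fun t => F (insert i t)) hj hl hjl hcard hr hR hε
    hbal hsmall hE (hcand_mem j hj) (hcand_mem l hl) (hcand_err j hj) (hcand_err l hl) htj htl

lemma hasRounding_succ_succ (hU : #U = n + 2) (hdr : d ≤ r) (hdn : d + r ≤ n)
    (hr : 2 * (r + 1) ≤ n + 2) (ihU : ∀ i ∈ U, HasRounding (d + 1) (U.erase i) (r + 1))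
    (ihd : ∀ V : Finset ι, HasRounding d V r) : HasRounding (d + 1) U (r + 1) := by
  intro R ε F q hq hR hbal hsmall hF
  replace hbal : IsBalanced R (n + 2) (r + 1) := hU ▸ hbal (by lia) (by lia)
  have hpos : (0 : ℝ) < (n + 2).choose (r + 1) := by exact_mod_cast Nat.choose_pos (by lia)
  rw [hU] at hF ⊢
  have hε : 0 ≤ ε := nonneg_of_mul_nonneg_left ((sum_nonneg fun _ _ => sq_nonneg _).trans hF) hpos
  obtain ⟨i, hi, hFi⟩ := exists_sum_powersetCard_erase_le hU (by lia) hF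
  have hcard : #(U.erase i) = n + 1 := by rw [card_erase_of_mem hi, hU]; rfl
  obtain ⟨G₀, hG₀, hG₀err⟩ := ihU i hi R ε F q
    (mem_degreeLT_of_subset (powersetCard_erase_subset U (r + 1) i) hq) hR
    (fun _ hdn => hcard ▸ hbal.erase hR (by lia) hr) hsmall (hcard ▸ hFi)
  have hchoose : (#(U.erase i)).choose (r + 1) ≤ (n + 2).choose (r + 1) :=
    Nat.choose_le_choose _ (by lia)
  obtain ⟨G, hG, hGerr⟩ := exists_mem_degreeLT_sum_sub_sq_le hi hU hr hR hε hbal hsmall rfl ihd hq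
    hF hG₀ (hG₀err.trans (by gcongr))
  refine ⟨G, hG, (sum_sub_sq_le_two_mul_of_mem_degreeLT hR (fun _ _ => ?_) hq hG ?_).trans
    (mul_le_mul_of_nonneg_left hF zero_le_two)⟩
  · have hrn : (r : ℝ) ≤ n := by exact_mod_cast (by lia : r ≤ n)
    rw [hU]
    refine hbal.scale (by linarith) le_rfl ?_ ?_ <;> push_cast <;> linarith
  · rw [hU]
    exact mul_pow_le_of_le_pow_mul hR hε hsmall (by norm_num) hGerr

lemma hasRounding_of_forall_mem_degreeLT {K : ℕ}
    (h : ∀ F : Finset ι → ℝ, F ∈ degreeLT K (powersetCard r U)) : HasRounding K U r := by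
  intro R ε F q _ _ _ _ hF
  refine ⟨F, h _, ?_⟩
  have hnonneg : 0 ≤ ∑ s ∈ powersetCard r U, (F s - q s) ^ 2 := sum_nonneg fun _ _ => sq_nonneg _
  simp only [sub_self, ne_eq, OfNat.ofNat_ne_zero, not_false_eq_true, zero_pow, sum_const_zero]
  linarith

lemma hasRounding_zero : HasRounding 0 U r := by
  intro R ε F q hq _ _ _ hF
  have hnonneg : 0 ≤ ∑ s ∈ powersetCard r U, (F s - q s) ^ 2 := sum_nonneg fun _ _ => sq_nonneg _
  refine ⟨0, mem_degreeLT_of_eq_zero fun _ _ => by simp, ?_⟩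
  calc ∑ s ∈ powersetCard r U, (F s - ((0 : Finset ι → ℤ) s : ℝ)) ^ 2
      = ∑ s ∈ powersetCard r U, (F s - q s) ^ 2 := by
        refine sum_congr rfl fun s hs => ?_
        rw [eq_zero_of_mem_degreeLT_zero hq hs]
        simp
    _ ≤ 2 * (ε * (#U).choose r) := by linarith

lemma hasRounding_of_card_sub {K : ℕ} (hr : r ≤ #U) (h : HasRounding K U (#U - r)) :
    HasRounding K U r := by
  intro R ε F q hq hR hbal hsmall hF
  have hbal' (hK : K ≤ #U - r) (hKr : K + (#U - r) ≤ #U) : IsBalanced R #U (#U - r) := by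
    obtain ⟨hlow, hhigh⟩ := hbal (by lia) (by lia)
    constructor <;> rw [Nat.cast_sub hr]
    · exact hhigh
    · linarith
  have hq' : (fun s => q (U \ s)) ∈ degreeLT K (powersetCard (#U - r) U) :=
    comp_sdiff_mem_degreeLT (by rwa [Nat.sub_sub_self hr])
  obtain ⟨G, hG, hGerr⟩ := h R ε (fun s => F (U \ s)) _ hq' hR hbal' hsmall <| by
    rwa [sum_powersetCard_sdiff hr fun s => (F s - q s) ^ 2, Nat.choose_symm hr]
  refine ⟨fun s => G (U \ s), comp_sdiff_mem_degreeLT hG, ?_⟩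
  rw [Nat.choose_symm hr] at hGerr
  rw [← sum_powersetCard_sdiff hr]
  refine (sum_congr rfl fun s hs => ?_).trans_le hGerr
  dsimp only
  rw [Finset.sdiff_sdiff_eq_self (mem_powersetCard.1 hs).1]

theorem hasRounding (K : ℕ) (U : Finset ι) (r : ℕ) : HasRounding K U r := by
  induction K generalizing U r with
  | zero => exact hasRounding_zero
  | succ d ihd =>
    induction U using Finset.strongInduction generalizing r with
    | H U ihU =>
      have hsmall (r : ℕ) (hr : 2 * r ≤ #U) : HasRounding (d + 1) U r := by
        by_cases hrd : r < d + 1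
        · exact hasRounding_of_forall_mem_degreeLT (mem_degreeLT_of_lt hrd)
        by_cases hUd : #U < d + 1 + r
        · exact hasRounding_of_forall_mem_degreeLT (mem_degreeLT_of_card_lt hUd)
        obtain ⟨r, rfl⟩ : ∃ m, r = m + 1 := ⟨r - 1, by lia⟩
        obtain ⟨n, hn⟩ : ∃ n, #U = n + 2 := ⟨#U - 2, by lia⟩
        exact hasRounding_succ_succ hn (by lia) (by lia) (by lia)
          (fun i hi => ihU _ (erase_ssubset hi) _) fun V => ihd V r
      by_cases hr : r ≤ #U
      · rcases le_total (2 * r) #U with h | h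
        · exact hsmall r h
        · exact hasRounding_of_card_sub hr (hsmall _ (by lia))
      · exact hasRounding_of_forall_mem_degreeLT (mem_degreeLT_of_card_lt (by lia))

end Rounding

section BooleanRounding

variable {ι : Type*} [DecidableEq ι] {U : Finset ι} {F G : Finset ι → ℤ} {q : Finset ι → ℝ}
  {k r : ℕ} {R ε : ℝ}

lemma exists_bool_sum_sub_sq_le {α : Type*} {s : Finset α} {f : α → ℤ}
    (hf : ∀ x ∈ s, f x = 0 ∨ f x = 1) (c : ℝ) :
    ∃ b : ℤ, (b = 0 ∨ b = 1) ∧ ∑ x ∈ s, (f x - b : ℝ) ^ 2 ≤ 2 * ∑ x ∈ s, (f x - c) ^ 2 := by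
  have hsum (c : ℝ) : ∑ x ∈ s, (f x - c) ^ 2 = (1 - 2 * c) * ∑ x ∈ s, (f x : ℝ) + #s * c ^ 2 := by
    rw [mul_sum, ← nsmul_eq_mul, ← sum_const, ← sum_add_distrib]
    refine sum_congr rfl fun x hx => ?_
    rcases hf x hx with h | h <;> rw [h] <;> push_cast <;> ring
  have hnonneg : 0 ≤ ∑ x ∈ s, (f x : ℝ) :=
    sum_nonneg fun x hx => by rcases hf x hx with h | h <;> simp [h]
  have hle : ∑ x ∈ s, (f x : ℝ) ≤ #s := by
    rw [← nsmul_one, ← sum_const]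
    exact sum_le_sum fun x hx => by rcases hf x hx with h | h <;> simp [h]
  rcases le_total (2 * ∑ x ∈ s, (f x : ℝ)) #s with h | h
  · refine ⟨0, .inl rfl, ?_⟩
    rw [hsum, hsum]
    push_cast
    linarith [mul_nonneg hnonneg (sq_nonneg (1 - 2 * c)),
      mul_nonneg (sub_nonneg.2 h) (sq_nonneg c)]
  · refine ⟨1, .inr rfl, ?_⟩
    rw [hsum, hsum]
    push_cast
    linarith [mul_nonneg (sub_nonneg.2 hle) (sq_nonneg (1 - 2 * c)),
      mul_nonneg (sub_nonneg.2 h) (sq_nonneg (1 - c))]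

/-- The function `G ^ 2 - G` has low degree and vanishes wherever `G` agrees with `F`, hence off a
set too small to carry its norm. -/
lemma eq_zero_or_eq_one_of_mem_degreeLT (hR : 4 ≤ R)
    (hbal : 0 < r → r < #U → IsBalanced (3 * R) #U r)
    (hF : ∀ s ∈ powersetCard r U, F s = 0 ∨ F s = 1)
    (hG : (fun s => (G s : ℝ)) ∈ degreeLT (k + 1) (powersetCard r U))
    (hsmall : (∑ s ∈ powersetCard r U, (F s - G s : ℝ) ^ 2) * R ^ (512 * (k + k) + 12) ≤
      (#U).choose r) {s : Finset ι} (hs : s ∈ powersetCard r U) : G s = 0 ∨ G s = 1 := by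
  set 𝒜 := powersetCard r U
  have hdeg : (fun s => (G s : ℝ)) * (fun s => (G s : ℝ)) - (fun s => (G s : ℝ)) ∈
      degreeLT (k + k + 1) 𝒜 :=
    sub_mem (mul_mem_degreeLT hG hG) (degreeLT_mono (by lia) hG)
  have hcard : (#{s ∈ 𝒜 | F s ≠ G s} : ℝ) ≤ ∑ s ∈ 𝒜, (F s - G s : ℝ) ^ 2 := by
    simpa [sub_eq_zero] using card_filter_ne_zero_le_sum_sq 𝒜 fun s => F s - G s
  have hanti := sum_sq_le_of_card_mul_pow_le hR hbal hdeg (filter_subset (fun s => F s ≠ G s) 𝒜)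
    ((mul_le_mul_of_nonneg_right hcard (by positivity)).trans hsmall)
  simp only [Pi.sub_apply, Pi.mul_apply] at hanti
  rw [sum_filter_of_ne] at hanti
  · have hnonneg : ∀ s ∈ 𝒜, 0 ≤ (G s * G s - G s : ℝ) ^ 2 := fun _ _ => sq_nonneg _
    have hsum : ∑ s ∈ 𝒜, (G s * G s - G s : ℝ) ^ 2 = 0 := by linarith [sum_nonneg hnonneg]
    have hzero : (G s * G s - G s : ℝ) = 0 :=
      pow_eq_zero_iff two_ne_zero |>.1 ((sum_eq_zero_iff_of_nonneg hnonneg).1 hsum s hs)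
    have hidem : IsIdempotentElem (G s) := by exact_mod_cast sub_eq_zero.1 hzero
    exact IsIdempotentElem.iff_eq_zero_or_one.1 hidem
  · rintro s hs hne heq
    rcases hF s hs with h | h <;> simp [← heq, h] at hne

lemma exists_bool_mem_degreeLT_of_pos (hR : 4 ≤ R) (hr : r ≤ #U) (hbal : IsBalanced R #U r)
    (hF : ∀ s ∈ powersetCard r U, F s = 0 ∨ F s = 1)
    (hq : q ∈ degreeLT (k + 1) (powersetCard r U)) (hε : ε * R ^ (1024 * (k + 1)) ≤ 1)
    (hFq : ∑ s ∈ powersetCard r U, (F s - q s) ^ 2 ≤ ε * (#U).choose r) :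
    ∃ G : Finset ι → ℤ, (∀ s ∈ powersetCard r U, G s = 0 ∨ G s = 1) ∧
      (fun s => (G s : ℝ)) ∈ degreeLT (k + 1) (powersetCard r U) ∧
      ∑ s ∈ powersetCard r U, (F s - G s : ℝ) ^ 2 ≤ 2 * (ε * (#U).choose r) := by
  have hN : (0 : ℝ) < (#U).choose r := by exact_mod_cast Nat.choose_pos hr
  have hε0 : 0 ≤ ε :=
    nonneg_of_mul_nonneg_left ((sum_nonneg fun _ _ => sq_nonneg _).trans hFq) hN
  obtain ⟨G, hG, hFG⟩ := hasRounding (k + 1) U r R ε F q hq hR (fun _ _ => hbal)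
    ((mul_le_mul_of_nonneg_left (pow_le_pow_right₀ (by linarith) (by lia)) hε0).trans hε) hFq
  refine ⟨G, fun s hs => eq_zero_or_eq_one_of_mem_degreeLT hR (fun _ _ => ?_) hF hG ?_ hs, hG, hFG⟩
  · have hrU : (r : ℝ) ≤ #U := by exact_mod_cast hr
    exact hbal.scale (by linarith) le_rfl (by linarith [r.cast_nonneg (α := ℝ)]) (by linarith)
  calc (∑ s ∈ powersetCard r U, (F s - G s : ℝ) ^ 2) * R ^ (512 * (k + k) + 12)
      ≤ 2 * (ε * (#U).choose r) * R ^ (512 * (k + k) + 12) := by gcongr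
    _ ≤ R * (ε * (#U).choose r) * R ^ (512 * (k + k) + 12) := by gcongr; linarith
    _ = ε * R ^ (512 * (k + k) + 13) * (#U).choose r := by ring
    _ ≤ ε * R ^ (1024 * (k + 1)) * (#U).choose r := by
        gcongr
        · linarith
        · lia
    _ ≤ (#U).choose r := mul_le_of_le_one_left hN.le hε

theorem exists_bool_mem_degreeLT (hR : 4 ≤ R) (hr : r ≤ #U) (hbal : IsBalanced R #U r)
    (hF : ∀ s ∈ powersetCard r U, F s = 0 ∨ F s = 1)
    (hq : q ∈ degreeLT (k + 1) (powersetCard r U))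
    (hε : k ≠ 0 → ε * R ^ (1024 * (k + 1)) ≤ 1)
    (hFq : ∑ s ∈ powersetCard r U, (F s - q s) ^ 2 ≤ ε * (#U).choose r) :
    ∃ G : Finset ι → ℤ, (∀ s ∈ powersetCard r U, G s = 0 ∨ G s = 1) ∧
      (fun s => (G s : ℝ)) ∈ degreeLT (k + 1) (powersetCard r U) ∧
      ∑ s ∈ powersetCard r U, (F s - G s : ℝ) ^ 2 ≤ 2 * (ε * (#U).choose r) := by
  rcases eq_or_ne k 0 with rfl | hk
  · obtain ⟨c, hc⟩ := eqOn_const_of_mem_degreeLT_one hq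
    obtain ⟨b, hb, hFb⟩ := exists_bool_sum_sub_sq_le hF c
    refine ⟨fun _ => b, fun _ _ => hb, const_mem_degreeLT 0 b, hFb.trans ?_⟩
    rw [sum_congr rfl fun s hs => by rw [hc s hs]] at hFq
    linarith
  · exact exists_bool_mem_degreeLT_of_pos hR hr hbal hF hq (hε hk) hFq

end BooleanRounding

section Transfer

variable {m k : ℕ} {q : Finset (Fin n) → ℝ} {x y : SlicePoint n p}

/-- The set of ones of a point of the slice, which identifies the slice with the `p * n`-subsets
of `Fin n`. -/
def ones (x : SlicePoint n p) : Finset (Fin n) := {i | x.1 i = true}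

lemma mem_ones {i : Fin n} : i ∈ ones x ↔ x.1 i = true := by
  simp [ones]

lemma ones_injective : Function.Injective (ones : SlicePoint n p → Finset (Fin n)) := fun x y h =>
  Subtype.ext <| funext fun i => Bool.eq_iff_iff.2 <| by rw [← mem_ones, ← mem_ones, h]

lemma ones_mem_powersetCard (hm : (m : ℝ) = p * n) (x : SlicePoint n p) :
    ones x ∈ powersetCard m univ :=
  mem_powersetCard_univ.2 <| by exact_mod_cast x.2.trans hm.symm

lemma exists_ones_eq (hm : (m : ℝ) = p * n) {s : Finset (Fin n)} (hs : s ∈ powersetCard m univ) :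
    ∃ x : SlicePoint n p, ones x = s :=
  ⟨⟨fun i => decide (i ∈ s), by simp [← hm, mem_powersetCard_univ.1 hs]⟩, by ext; simp [mem_ones]⟩

lemma sum_comp_ones (hm : (m : ℝ) = p * n) (F : Finset (Fin n) → ℝ) :
    ∑ x : SlicePoint n p, F (ones x) = ∑ s ∈ powersetCard m univ, F s :=
  sum_nbij ones (fun x _ => ones_mem_powersetCard hm x) ones_injective.injOn
    (fun _ hs => (exists_ones_eq hm hs).imp fun _ hx => ⟨mem_coe.2 (mem_univ _), hx⟩)
    fun _ _ => rfl

lemma card_slicePoint (hm : (m : ℝ) = p * n) :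
    (Fintype.card (SlicePoint n p) : ℝ) = n.choose m := by
  simpa using sum_comp_ones hm fun _ => 1

lemma sNormSq_comp_ones (hm : (m : ℝ) = p * n) (F : Finset (Fin n) → ℝ) :
    sNormSq (fun x : SlicePoint n p => F (ones x)) =
      (∑ s ∈ powersetCard m univ, F s ^ 2) / n.choose m := by
  simp only [sNormSq, sInner, sExp, ← sq, card_slicePoint hm, sum_comp_ones hm fun s => F s ^ 2]

lemma andT_eq_andIndicator_ones (T : Finset (Fin n)) (x : SlicePoint n p) :
    andT T x = andIndicator T (ones x) := by
  simp [andT, coordR, andIndicator, prod_ite_zero, subset_iff, mem_ones]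

lemma degLE_eq_map (n : ℕ) (p : ℝ) (k : ℕ) : degLE n p k =
    (Submodule.span ℝ (andIndicator '' {T | #T < k + 1})).map (LinearMap.funLeft ℝ ℝ ones) := by
  rw [degLE, Submodule.map_span, Set.image_image]
  congr 1
  ext g
  simp only [Set.mem_image, Set.mem_ofPred_eq, Nat.lt_succ_iff, funext_iff,
    andT_eq_andIndicator_ones, LinearMap.funLeft_apply, eq_comm]

lemma comp_ones_mem_degLE (hm : (m : ℝ) = p * n) :
    (fun x => q (ones x)) ∈ degLE n p k ↔ q ∈ degreeLT (k + 1) (powersetCard m univ) := by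
  rw [degLE_eq_map, mem_degreeLT]
  refine exists_congr fun P => and_congr_right fun _ => ⟨fun h s hs => ?_, fun h => ?_⟩
  · obtain ⟨x, rfl⟩ := exists_ones_eq hm hs
    exact (congrFun h x).symm
  · exact funext fun x => (h _ (ones_mem_powersetCard hm x)).symm

lemma exists_int_comp_ones {f : SlicePoint n p → ℝ} (hf : ∀ x, f x = 0 ∨ f x = 1) :
    ∃ F : Finset (Fin n) → ℤ, f = fun x => (F (ones x) : ℝ) := by
  obtain ⟨F, hF⟩ := ones_injective.surjective_comp_right fun x => ⌊f x⌋
  refine ⟨F, funext fun x => ?_⟩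
  rw [show F (ones x) = ⌊f x⌋ from congrFun hF x]
  rcases hf x with h | h <;> simp [h]

lemma probNe_eq_sNormSq_sub {f g : SlicePoint n p → ℝ} (hf : ∀ x, f x = 0 ∨ f x = 1)
    (hg : ∀ x, g x = 0 ∨ g x = 1) : probNe f g = sNormSq (f - g) := by
  rw [probNe, sNormSq, sInner]
  congr 1 with x
  rcases hf x with h | h <;> rcases hg x with h' | h' <;> simp [h, h']

lemma isBalanced_inv_sq (hp : 0 < p) (hp2 : p ≤ 1 / 2) (hm : (m : ℝ) = p * n) :
    IsBalanced (p⁻¹ ^ 2) n m := by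
  have hmul : p⁻¹ ^ 2 * (p ^ 2 * n) = (n : ℝ) := by field_simp
  constructor <;> nth_rw 1 [← hmul, hm] <;> gcongr <;> nlinarith [n.cast_nonneg (α := ℝ)]

lemma mul_inv_sq_pow_le_one {ε : ℝ} (hp : 0 < p) (hp1 : p ≤ 1) (hk : k ≠ 0)
    (hε : ε ≤ p ^ (4096 * (k : ℝ))) : ε * (p⁻¹ ^ 2) ^ (1024 * (k + 1)) ≤ 1 := by
  have hpow : p ^ (4096 * (k : ℝ)) = p ^ (4096 * k) := by
    exact_mod_cast Real.rpow_natCast p (4096 * k)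
  rw [hpow] at hε
  calc ε * (p⁻¹ ^ 2) ^ (1024 * (k + 1)) ≤ p ^ (4096 * k) * (p⁻¹ ^ 2) ^ (1024 * (k + 1)) := by
        gcongr
    _ ≤ p ^ (4096 * k) * p⁻¹ ^ (4096 * k) := by
        rw [← pow_mul]
        exact mul_le_mul_of_nonneg_left
          (pow_le_pow_right₀ ((one_le_inv₀ hp).2 hp1) (by lia)) (by positivity)
    _ = 1 := by rw [← mul_pow, mul_inv_cancel₀ hp.ne', one_pow]

theorem exists_bool_mem_degLE {f h : SlicePoint n p → ℝ} {R ε : ℝ} (hm : (m : ℝ) = p * n)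
    (hmn : m ≤ n) (hR : 4 ≤ R) (hbal : IsBalanced R n m) (hf : ∀ x, f x = 0 ∨ f x = 1)
    (hh : h ∈ degLE n p k) (hfh : sNormSq (f - h) ≤ ε)
    (hε : k ≠ 0 → ε * R ^ (1024 * (k + 1)) ≤ 1) :
    ∃ g : SlicePoint n p → ℝ, (∀ x, g x = 0 ∨ g x = 1) ∧ g ∈ degLE n p k ∧ probNe f g ≤ 2 * ε := by
  have hN : (0 : ℝ) < n.choose m := by exact_mod_cast Nat.choose_pos hmn
  obtain ⟨F, rfl⟩ := exists_int_comp_ones hf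
  obtain ⟨q, rfl⟩ := ones_injective.surjective_comp_right h
  have hF : ∀ s ∈ powersetCard m univ, F s = 0 ∨ F s = 1 := fun s hs => by
    obtain ⟨x, rfl⟩ := exists_ones_eq hm hs
    simpa using hf x
  have hFq : ∑ s ∈ powersetCard m univ, (F s - q s) ^ 2 ≤ ε * n.choose m :=
    (div_le_iff₀ hN).1 <| (sNormSq_comp_ones hm fun s => F s - q s).symm.trans_le hfh
  obtain ⟨G, hG01, hG, hFG⟩ := exists_bool_mem_degreeLT (U := univ) hR (by simpa using hmn)
    (by simpa using hbal) hF ((comp_ones_mem_degLE hm).1 hh) hε (by simpa using hFq)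
  have hg01 (x : SlicePoint n p) : (G (ones x) : ℝ) = 0 ∨ (G (ones x) : ℝ) = 1 := by
    exact_mod_cast hG01 _ (ones_mem_powersetCard hm x)
  refine ⟨_, hg01, (comp_ones_mem_degLE hm).2 hG, ?_⟩
  rw [card_fin, ← mul_assoc, ← div_le_iff₀ hN] at hFG
  rw [probNe_eq_sNormSq_sub hf hg01]
  exact (sNormSq_comp_ones hm fun s => F s - G s).trans_le hFG

end Transfer

end KindlerSafra

/-- **Kindler–Safra theorem on the slice.** There is a universal constant `C > 0` such that:
if `0 < p ≤ 1/2`, `p n ∈ ℤ`, `f : S(n,p) → {0,1}` satisfies `‖f^{>k}‖₂² ≤ ε ≤ p^{C k}`,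
then `f` is `2 ε`-close to a degree-`k` Boolean-valued function on the slice. -/
theorem kindler_safra_slice :
    ∃ C : ℝ, 0 < C ∧
      ∀ (n : ℕ) (p : ℝ), 0 < p → p ≤ 1 / 2 → (∃ m : ℤ, (m : ℝ) = p * n) →
        ∀ (k : ℕ) (ε : ℝ) (f : SlicePoint n p → ℝ),
          (∀ x, f x = 0 ∨ f x = 1) →
          (∃ fk, IsLowProj n p k f fk ∧ sNormSq (f - fk) ≤ ε) →
          ε ≤ p ^ (C * k) →
          ∃ g : SlicePoint n p → ℝ,
            (∀ x, g x = 0 ∨ g x = 1) ∧ g ∈ degLE n p k ∧ probNe f g ≤ 2 * ε := by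
  refine ⟨4096, by norm_num, fun n p hp hp2 ⟨z, hz⟩ k ε f hf ⟨fk, ⟨hfk, _⟩, hfε⟩ hε => ?_⟩
  have hz0 : 0 ≤ z := by exact_mod_cast (by positivity : 0 ≤ p * n).trans_eq hz.symm
  obtain ⟨m, rfl⟩ := Int.eq_ofNat_of_zero_le hz0
  have hm : (m : ℝ) = p * n := by exact_mod_cast hz
  have hmn : m ≤ n := by
    exact_mod_cast hm.trans_le (mul_le_of_le_one_left n.cast_nonneg (by linarith))
  have hR : 4 ≤ p⁻¹ ^ 2 := by
    have hinv : 2 ≤ p⁻¹ := (le_inv_comm₀ two_pos hp).2 (by linarith)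
    nlinarith
  exact KindlerSafra.exists_bool_mem_degLE hm hmn hR (KindlerSafra.isBalanced_inv_sq hp hp2 hm) hf
    hfk hfε (KindlerSafra.mul_inv_sq_pow_le_one hp (by linarith) · hε)
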